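/- Let T_{B,m} = S_{B,m} ∪ {⟨A⟩ ⇒ ◇A : A over B, ||A|| ≤ m−2} ∪ {⟨□↓A⟩ ⇒ A : A over B, ||A|| ≤ m−2}, where S_{B,m} is the set of L◇-provable bracket-free sequents with at most 2 antecedent types, all types over B of length ≤ m. Then for any L◇ sequent Γ ⇒ A_{n+1} whose yield consists of types over B each of length ≤ m: Γ ⇒ A_{n+1} is provable in L◇ if and only if it is derivable from T_{B,m} using only the Cut rule. -/

import Mathlib

/-- Types of the bracketed Lambek calculus. -/
inductive PTy where
  | prim : ℕ → PTy
  | ldiv : PTy → PTy → PTy   -- ldiv A B = A \ B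
  | rdiv : PTy → PTy → PTy   -- rdiv B A = B / A
  | mul  : PTy → PTy → PTy
  | dia  : PTy → PTy
  | box  : PTy → PTy
deriving DecidableEq

/-- Type trees: leaves labeled by types, internal nodes are brackets. -/
inductive PTree where
  | leaf : PTy → PTree
  | node : List PTree → PTree

abbrev PHedge := List PTree

/-- Contexts: a hedge with one distinguished hole. -/
inductive PCtx where
  | hole : PHedge → PHedge → PCtx
  | brk  : PCtx → PHedge → PHedge → PCtx

/-- Substitution of a hedge for the hole of a context. -/
def PCtx.plug : PCtx → PHedge → PHedge
  | .hole pre post, D => pre ++ D ++ post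
  | .brk c pre post, D => pre ++ (PTree.node (c.plug D) :: post)

/-- All primitive types occurring in the type belong to `B`. -/
def PTy.over (B : Finset ℕ) : PTy → Prop
  | .prim p => p ∈ B
  | .ldiv A C => A.over B ∧ C.over B
  | .rdiv C A => C.over B ∧ A.over B
  | .mul A C => A.over B ∧ C.over B
  | .dia A => A.over B
  | .box A => A.over B

/-- Length of a type. -/
def lenP : PTy → ℕ
  | .prim _ => 1
  | .ldiv A B => lenP A + lenP B
  | .rdiv B A => lenP B + lenP A
  | .mul A B => lenP A + lenP B
  | .dia A => lenP A + 2
  | .box A => lenP A + 2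

mutual
/-- The yield of a tree: the sequence of types labeling its leaves. -/
def yieldTree : PTree → List PTy
  | .leaf A => [A]
  | .node ts => yieldHedge ts
/-- The yield of a hedge. -/
def yieldHedge : List PTree → List PTy
  | [] => []
  | t :: ts => yieldTree t ++ yieldHedge ts
end
/-- L◇ : the Lambek calculus with brackets
(the antecedent must be nonempty in the right rules for the divisions). -/
inductive PProv : PHedge → PTy → Prop where
  | id (p) : PProv [.leaf (.prim p)] (.prim p)
  | ldivL (G : PHedge) (D : PCtx) (A B C) :
      PProv G A → PProv (D.plug [.leaf B]) C →
      PProv (D.plug (G ++ [.leaf (.ldiv A B)])) C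
  | ldivR (Pi : PHedge) (A B) : Pi ≠ [] →
      PProv (.leaf A :: Pi) B → PProv Pi (.ldiv A B)
  | rdivL (G : PHedge) (D : PCtx) (A B C) :
      PProv G A → PProv (D.plug [.leaf B]) C →
      PProv (D.plug (.leaf (.rdiv B A) :: G)) C
  | rdivR (Pi : PHedge) (A B) : Pi ≠ [] →
      PProv (Pi ++ [.leaf A]) B → PProv Pi (.rdiv B A)
  | mulL (G : PCtx) (A B C) :
      PProv (G.plug [.leaf A, .leaf B]) C → PProv (G.plug [.leaf (.mul A B)]) C
  | mulR (G D : PHedge) (A B) :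
      PProv G A → PProv D B → PProv (G ++ D) (.mul A B)
  | diaL (G : PCtx) (A B) :
      PProv (G.plug [.node [.leaf A]]) B → PProv (G.plug [.leaf (.dia A)]) B
  | diaR (G : PHedge) (A) :
      PProv G A → PProv [.node G] (.dia A)
  | boxL (G : PCtx) (A B) :
      PProv (G.plug [.leaf A]) B → PProv (G.plug [.node [.leaf (.box A)]]) B
  | boxR (G : PHedge) (A) :
      PProv [.node G] A → PProv G (.box A)
  | cut (G : PHedge) (D : PCtx) (A B) :
      PProv G A → PProv (D.plug [.leaf A]) B → PProv (D.plug G) B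
/-- Derivability of a sequent from a set of sequents using the Cut rule only. -/
inductive CutDeriv (S : Set (PHedge × PTy)) : PHedge → PTy → Prop where
  | base (G A) : (G, A) ∈ S → CutDeriv S G A
  | cut (G : PHedge) (D : PCtx) (A B) :
      CutDeriv S G A → CutDeriv S (D.plug [.leaf A]) B → CutDeriv S (D.plug G) B

/-- The set `S_{B,m}` of L◇-provable bracket-free sequents with at most 2 antecedent
types, all types built over `B` of length at most `m`. -/
def SBm (B : Finset ℕ) (m : ℕ) : Set (PHedge × PTy) :=
  {s | ∃ (L : List PTy) (A : PTy),
        s = (L.map PTree.leaf, A) ∧ L.length ≤ 2 ∧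
        (∀ T ∈ A :: L, PTy.over B T ∧ lenP T ≤ m) ∧
        PProv (L.map PTree.leaf) A}

/-- The set `T_{B,m}`. -/
def TBm (B : Finset ℕ) (m : ℕ) : Set (PHedge × PTy) :=
  SBm B m ∪
  {s | ∃ A : PTy, PTy.over B A ∧ lenP A ≤ m - 2 ∧
        s = ([PTree.node [PTree.leaf A]], PTy.dia A)} ∪
  {s | ∃ A : PTy, PTy.over B A ∧ lenP A ≤ m - 2 ∧
        s = ([PTree.node [PTree.leaf (PTy.box A)]], A)}


/-! ## Labelled types and tokens -/

inductive LTy where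
  | prim : ℕ → LTy
  | ldiv : LTy → LTy → LTy
  | rdiv : LTy → LTy → LTy
  | mul : LTy → LTy → LTy
  | dia : ℕ → LTy → LTy
  | box : ℕ → LTy → LTy

inductive Tok (α : Type) where
  | ty : α → Tok α
  | op : ℕ → Tok α
  | cl : ℕ → Tok α

/-- Stack machine checking bracket matching. -/
def chk {α : Type} : List ℕ → List (Tok α) → Option (List ℕ)
  | s, [] => some s
  | s, .ty _ :: X => chk s X
  | s, .op i :: X => chk (i :: s) X
  | [], .cl _ :: _ => none
  | j :: s, .cl i :: X => if i = j then chk s X else none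

def WB {α : Type} (X : List (Tok α)) : Prop := chk [] X = some []

theorem chk_append {α : Type} (X Y : List (Tok α)) :
    ∀ s, chk s (X ++ Y) = (chk s X).bind (fun t => chk t Y) := by
  induction X with
  | nil => intro s; simp [chk]
  | cons a X ih =>
    intro s
    cases a with
    | ty a => simp [chk, ih]
    | op i => simp [chk, ih]
    | cl i =>
      cases s with
      | nil => simp [chk]
      | cons j s =>
        simp only [List.cons_append, chk]
        split_ifs <;> simp [ih]

theorem chk_frame {α : Type} (X : List (Tok α)) :
    ∀ s t u, chk s X = some t → chk (s ++ u) X = some (t ++ u) := by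
  induction X with
  | nil => intro s t u h; simp_all [chk]
  | cons a X ih =>
    intro s t u h
    cases a with
    | ty a => exact ih _ _ _ h
    | op i => exact ih (i :: s) _ _ h
    | cl i =>
      cases s with
      | nil => simp [chk] at h
      | cons j s =>
        simp only [List.cons_append, chk] at h ⊢
        split_ifs at h ⊢
        exact ih _ _ _ h

theorem WB.chk {α : Type} {X : List (Tok α)} (h : WB X) (s : List ℕ) : chk s X = some s := by
  simpa using chk_frame X [] [] s h

theorem WB.nil {α : Type} : WB ([] : List (Tok α)) := rfl

theorem WB.ty {α : Type} (a : α) : WB [Tok.ty a] := rfl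

theorem chk_mid {α : Type} {L T R : List (Tok α)} (hT : WB T) (s : List ℕ) :
    _root_.chk s (L ++ (T ++ R)) = _root_.chk s (L ++ R) := by
  simp only [chk_append]
  congr 1; funext t
  rw [hT.chk]; rfl

theorem WB.repl {α : Type} {L T T' R : List (Tok α)} (h : WB (L ++ (T ++ R))) (hT : WB T)
    (hT' : WB T') : WB (L ++ (T' ++ R)) := by
  unfold WB at h ⊢
  rw [chk_mid hT] at h
  rw [chk_mid hT', h]

theorem WB.repl1 {α : Type} {L T R : List (Tok α)} {a : α} (h : WB (L ++ (Tok.ty a :: R)))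
    (hT : WB T) : WB (L ++ (T ++ R)) :=
  WB.repl (T := [Tok.ty a]) h (WB.ty a) hT

theorem WB.to1 {α : Type} {L T R : List (Tok α)} (a : α) (h : WB (L ++ (T ++ R)))
    (hT : WB T) : WB (L ++ (Tok.ty a :: R)) :=
  WB.repl (T' := [Tok.ty a]) h hT (WB.ty a)

theorem WB.append {α : Type} {X Y : List (Tok α)} (h : WB X) (h' : WB Y) : WB (X ++ Y) := by
  unfold WB; rw [chk_append, h.chk]; exact h'

theorem WB.brk {α : Type} {X : List (Tok α)} (h : WB X) (i : ℕ) :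
    WB (Tok.op i :: (X ++ [Tok.cl i])) := by
  unfold WB; simp only [_root_.chk, chk_append, h.chk]; simp [_root_.chk]

theorem WB.cons_ty {α : Type} {X : List (Tok α)} (a : α) :
    WB (Tok.ty a :: X) ↔ WB X := Iff.rfl

theorem WB.append_ty {α : Type} {X : List (Tok α)} (a : α) :
    WB (X ++ [Tok.ty a]) ↔ WB X := by
  unfold WB; rw [chk_append]; cases h : _root_.chk [] X <;> simp [_root_.chk]

theorem wb_split {α : Type} {P Q S : List (Tok α)} (h : WB (P ++ Q)) (h' : WB (Q ++ S)) :
    WB P ∧ WB Q ∧ WB S := by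
  unfold WB at h h'
  rw [chk_append] at h h'
  obtain ⟨t, ht, h2⟩ := Option.bind_eq_some_iff.1 h
  obtain ⟨s, hs, h3⟩ := Option.bind_eq_some_iff.1 h'
  have := chk_frame _ _ _ t hs
  simp only [List.nil_append] at this
  rw [this] at h2
  simp only [Option.some.injEq, List.append_eq_nil_iff] at h2
  obtain ⟨rfl, rfl⟩ := h2
  exact ⟨ht, hs, h3⟩

theorem not_WB_cl {α : Type} {X : List (Tok α)} {i : ℕ} : ¬ WB (Tok.cl i :: X) := by
  simp [WB, chk]

theorem not_WB_op {α : Type} {X : List (Tok α)} {i : ℕ} : ¬ WB (X ++ [Tok.op i]) := by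
  intro h
  unfold WB at h; rw [chk_append] at h
  obtain ⟨t, ht, h2⟩ := Option.bind_eq_some_iff.1 h
  simp [chk] at h2

/-- The cut-free flat calculus. -/
inductive FP : List (Tok LTy) → LTy → Prop where
  | id (p) : FP [.ty (.prim p)] (.prim p)
  | ldivL (G L R A B C) : FP G A → FP (L ++ (.ty B :: R)) C →
      FP (L ++ (G ++ (.ty (.ldiv A B) :: R))) C
  | ldivR (X A B) : X ≠ [] → FP (.ty A :: X) B → FP X (.ldiv A B)
  | rdivL (G L R A B C) : FP G A → FP (L ++ (.ty B :: R)) C →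
      FP (L ++ (.ty (.rdiv B A) :: (G ++ R))) C
  | rdivR (X A B) : X ≠ [] → FP (X ++ [.ty A]) B → FP X (.rdiv B A)
  | mulL (L R A B C) : FP (L ++ (.ty A :: .ty B :: R)) C → FP (L ++ (.ty (.mul A B) :: R)) C
  | mulR (G D A B) : FP G A → FP D B → FP (G ++ D) (.mul A B)
  | diaL (i L R A C) : FP (L ++ (.op i :: .ty A :: .cl i :: R)) C →
      FP (L ++ (.ty (.dia i A) :: R)) C
  | diaR (i G A) : FP G A → FP (.op i :: (G ++ [.cl i])) (.dia i A)
  | boxL (i L R A C) : FP (L ++ (.ty A :: R)) C →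
      FP (L ++ (.op i :: .ty (.box i A) :: .cl i :: R)) C
  | boxR (i G A) : WB G → FP (.op i :: (G ++ [.cl i])) A → FP G (.box i A)

theorem FP.wbal {X C} (h : FP X C) : WB X := by
  induction h with
  | id p => exact WB.ty _
  | ldivL G L R A B C _ _ ih1 ih2 =>
    have := WB.repl1 (T := G ++ [Tok.ty (LTy.ldiv A B)]) ih2 (ih1.append (WB.ty _))
    simpa using this
  | ldivR X A B hx _ ih => exact ih
  | rdivL G L R A B C _ _ ih1 ih2 =>
    have := WB.repl1 (T := [Tok.ty (LTy.rdiv B A)] ++ G) ih2 ((WB.ty _).append ih1)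
    simpa using this
  | rdivR X A B hx _ ih => exact (WB.append_ty _).1 ih
  | mulL L R A B C _ ih =>
    exact WB.to1 (T := [Tok.ty A, Tok.ty B]) _ ih rfl
  | mulR G D A B _ _ ih1 ih2 => exact ih1.append ih2
  | diaL i L R A C _ ih =>
    exact WB.to1 (T := [Tok.op i, Tok.ty A, Tok.cl i]) _ ih (by simp [WB, chk])
  | diaR i G A _ ih => exact ih.brk i
  | boxL i L R A C _ ih =>
    exact WB.repl1 (T := [Tok.op i, Tok.ty (LTy.box i A), Tok.cl i]) ih (by simp [WB, chk])
  | boxR i G A hG hp ih => exact hG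

def adjOK {α : Type} : Tok α → Tok α → Prop
  | .op _, .cl _ => False
  | _, _ => True

def NA {α : Type} (X : List (Tok α)) : Prop := List.IsChain adjOK X

theorem NA.repl1 {α : Type} {L T R : List (Tok α)} {a : α} (h : NA (L ++ (Tok.ty a :: R)))
    (hT : WB T) (hn : T ≠ []) (hN : NA T) : NA (L ++ (T ++ R)) := by
  unfold NA at *
  have hhead : ∀ y ∈ T.head?, ∀ x, adjOK x y := by
    intro y hy x
    cases T with
    | nil => simp at hn
    | cons t T =>
      simp at hy; subst hy
      cases t with
      | cl i => exact absurd hT not_WB_cl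
      | _ => cases x <;> simp [adjOK]
  have hlast : ∀ y ∈ T.getLast?, ∀ x, adjOK y x := by
    intro y hy x
    obtain ⟨T', t, rfl⟩ := List.eq_nil_or_concat T |>.resolve_left hn
    simp at hy; subst hy
    cases t with
    | op i => exact absurd hT (by simpa using not_WB_op)
    | _ => cases x <;> simp [adjOK]
  rw [List.isChain_append] at h ⊢
  obtain ⟨h1, h2, h3⟩ := h
  refine ⟨h1, ?_, ?_⟩
  · rw [List.isChain_append]
    refine ⟨hN, ?_, fun x hx y hy => hlast x hx y⟩
    exact h2.tail
  · intro x hx y hy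
    apply hhead y
    cases T with
    | nil => simp at hn
    | cons t T => simpa using hy

theorem FP.na {X C} (h : FP X C) : X ≠ [] ∧ NA X := by
  induction h with
  | id p => exact ⟨by simp, by simp [NA]⟩
  | ldivL G L R A B C h1 _ ih1 ih2 =>
    refine ⟨by simp, ?_⟩
    have hG : NA (G ++ ([Tok.ty (LTy.ldiv A B)])) := by
      have := NA.repl1 (L := []) (R := [Tok.ty (LTy.ldiv A B)]) (a := A) (T := G)
        (by simp [NA, adjOK]) h1.wbal ih1.1 ih1.2
      simpa using this
    have := NA.repl1 (T := G ++ [Tok.ty (LTy.ldiv A B)]) ih2.2 (h1.wbal.append (WB.ty _))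
      (by simp) hG
    simpa using this
  | ldivR X A B hx _ ih => exact ⟨hx, List.IsChain.tail ih.2⟩
  | rdivL G L R A B C h1 _ ih1 ih2 =>
    refine ⟨by simp, ?_⟩
    have hG : NA ([Tok.ty (LTy.rdiv B A)] ++ G) := by
      have := NA.repl1 (L := [Tok.ty (LTy.rdiv B A)]) (R := []) (a := A) (T := G)
        (by simp [NA, adjOK]) h1.wbal ih1.1 ih1.2
      simpa using this
    have := NA.repl1 (T := [Tok.ty (LTy.rdiv B A)] ++ G) ih2.2 ((WB.ty _).append h1.wbal)
      (by simp) hG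
    simpa using this
  | rdivR X A B hx _ ih => exact ⟨hx, (List.isChain_append.1 ih.2).1⟩
  | mulL L R A B C _ ih =>
    refine ⟨by simp, ?_⟩
    have h1 := List.isChain_append.1 ih.2
    refine List.isChain_append.2 ⟨h1.1, ?_, ?_⟩
    · have := h1.2.1.tail
      simp only [List.tail_cons, List.isChain_cons] at this ⊢
      exact ⟨fun y hy => by simp [adjOK], this.2⟩
    · intro x hx y hy
      simp at hy; subst hy; cases x <;> simp [adjOK]
  | mulR G D A B h1 h2 ih1 ih2 =>
    refine ⟨by simp [ih1.1], ?_⟩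
    have := NA.repl1 (L := []) (R := [Tok.ty B]) (a := A) (T := G)
        (by simp [NA, adjOK]) h1.wbal ih1.1 ih1.2
    have := NA.repl1 (L := G) (R := []) (a := B) (T := D)
        (by simpa using this) h2.wbal ih2.1 ih2.2
    simpa using this
  | diaL i L R A C _ ih =>
    refine ⟨by simp, ?_⟩
    have h1 := List.isChain_append.1 ih.2
    refine List.isChain_append.2 ⟨h1.1, ?_, ?_⟩
    · have := h1.2.1.tail.tail.tail
      simp only [List.tail_cons, List.isChain_cons] at this ⊢
      exact ⟨fun y hy => by simp [adjOK], this⟩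
    · intro x hx y hy
      simp at hy; subst hy; cases x <;> simp [adjOK]
  | diaR i G A h1 ih =>
    refine ⟨by simp, ?_⟩
    have := NA.repl1 (L := [Tok.op i]) (R := [Tok.cl i]) (a := A) (T := G)
        (by simp [NA, adjOK]) h1.wbal ih.1 ih.2
    simpa using this
  | boxL i L R A C _ ih =>
    refine ⟨by simp, ?_⟩
    exact NA.repl1 (T := [Tok.op i, Tok.ty (LTy.box i A), Tok.cl i]) ih.2
      (by simp [WB, chk]) (by simp) (by simp [NA, adjOK])
  | boxR i G A hG hp ih =>
    have hne : G ≠ [] := by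
      rintro rfl
      have := ih.2
      simp [NA, adjOK] at this
    exact ⟨hne, (List.isChain_append.1 (List.IsChain.tail ih.2)).1⟩

set_option linter.unusedSimpArgs false
/-! ## Counting and interpolation -/

inductive Gen where
  | p : ℕ → Gen
  | o : ℕ → Gen
  | c : ℕ → Gen
deriving DecidableEq

def one (g h : Gen) : ℕ := if g = h then 1 else 0

def cnt (g : Gen) : LTy → ℕ
  | .prim n => one g (.p n)
  | .ldiv A B => cnt g A + cnt g B
  | .rdiv B A => cnt g B + cnt g A
  | .mul A B => cnt g A + cnt g B
  | .dia i A => one g (.o i) + cnt g A + one g (.c i)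
  | .box i A => one g (.o i) + cnt g A + one g (.c i)

def cntT (g : Gen) : Tok LTy → ℕ
  | .ty A => cnt g A
  | .op i => one g (.o i)
  | .cl i => one g (.c i)

def cntL (g : Gen) : List (Tok LTy) → ℕ
  | [] => 0
  | t :: X => cntT g t + cntL g X

theorem cntL_append (g : Gen) (X Y : List (Tok LTy)) :
    cntL g (X ++ Y) = cntL g X + cntL g Y := by
  induction X with
  | nil => simp [cntL]
  | cons a X ih => simp [cntL, ih]; omega

theorem split3 {α : Type} {L' R' L T R : List α} {x : α} (h : L' ++ (x :: R') = L ++ (T ++ R)) :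
    (∃ L2, L = L' ++ (x :: L2) ∧ R' = L2 ++ (T ++ R)) ∨
    (∃ T1 T2, T = T1 ++ (x :: T2) ∧ L' = L ++ T1 ∧ R' = T2 ++ R) ∨
    (∃ R1, R = R1 ++ (x :: R') ∧ L' = L ++ (T ++ R1)) := by
  rcases List.append_eq_append_iff.1 h with ⟨a, h1, h2⟩ | ⟨a, h1, h2⟩
  · cases a with
    | nil =>
      simp at h1 h2; subst h1
      cases T with
      | nil => right; right; exact ⟨[], by simpa using h2.symm, by simp⟩
      | cons t T =>
        simp at h2; obtain ⟨rfl, h2⟩ := h2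
        right; left; exact ⟨[], T, by simp, by simp, h2⟩
    | cons b a =>
      simp at h2; obtain ⟨rfl, h2⟩ := h2
      left; exact ⟨a, h1, h2⟩
  · rcases List.append_eq_append_iff.1 h2 with ⟨b, h3, h4⟩ | ⟨b, h3, h4⟩
    · right; right
      exact ⟨b, h4, by rw [h1, h3]⟩
    · cases b with
      | nil => right; right; exact ⟨[], by simpa using h4.symm, by simp at h3; simp [h1, h3]⟩
      | cons y b =>
        simp at h4; obtain ⟨rfl, h4⟩ := h4
        right; left; exact ⟨a, b, h3, h1, h4⟩

def Interp (X : List (Tok LTy)) (C : LTy) : Prop :=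
  ∀ L T R, X = L ++ (T ++ R) → T ≠ [] → WB T →
    ∃ E, FP T E ∧ FP (L ++ (.ty E :: R)) C ∧
      ∀ g, cnt g E ≤ cntL g T ∧ cnt g E ≤ cntL g L + cntL g R + cnt g C

theorem interp_tok {L' R' M : List (Tok LTy)} {x : LTy} {C : LTy}
    (hM : WB M) (hMn : M ≠ [])
    (hr : ∀ L R D, FP (L ++ (M ++ R)) D → FP (L ++ (.ty x :: R)) D)
    (hc : ∀ g, cntL g M = cnt g x)
    (ih : Interp (L' ++ (M ++ R')) C) : Interp (L' ++ (.ty x :: R')) C := by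
  intro L T R h hT hW
  have hh := split3 h
  clear h
  rcases hh with ⟨L2, rfl, rfl⟩ | ⟨T1, T2, rfl, rfl, rfl⟩ | ⟨R1, rfl, rfl⟩
  · obtain ⟨E, h1, h2, h3⟩ := ih (L' ++ (M ++ L2)) T R (by simp) hT hW
    refine ⟨E, h1, ?_, ?_⟩
    · have := hr L' (L2 ++ (.ty E :: R)) C (by simpa using h2)
      simpa using this
    · intro g; have := h3 g; have := hc g
      simp only [cntL_append, cntL, cntT] at *; omega
  · obtain ⟨E, h1, h2, h3⟩ := ih L (T1 ++ (M ++ T2)) R (by simp) (by simp [hMn])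
      (WB.repl1 hW hM)
    refine ⟨E, hr _ _ _ h1, h2, ?_⟩
    intro g; have := h3 g; have := hc g
    simp only [cntL_append, cntL, cntT] at *; omega
  · obtain ⟨E, h1, h2, h3⟩ := ih L T (R1 ++ (M ++ R')) (by simp) hT hW
    refine ⟨E, h1, ?_, ?_⟩
    · have := hr (L ++ (.ty E :: R1)) R' C (by simpa using h2)
      simpa using this
    · intro g; have := h3 g; have := hc g
      simp only [cntL_append, cntL, cntT] at *; omega

theorem interp_ldivL {G L' R' A B C} (hG : FP G A) (ih1 : Interp G A)
    (hp : FP (L' ++ (.ty B :: R')) C)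
    (ih2 : Interp (L' ++ (.ty B :: R')) C) :
    Interp (L' ++ (G ++ (.ty (.ldiv A B) :: R'))) C := by
  intro L T R h hT hW
  rw [← List.append_assoc] at h
  have hh := split3 h
  clear h
  rcases hh with ⟨L2, rfl, rfl⟩ | ⟨T1, T2, rfl, h, rfl⟩ | ⟨R1, rfl, h⟩
  · obtain ⟨E, h1, h2, h3⟩ := ih2 (L' ++ (.ty B :: L2)) T R (by simp) hT hW
    refine ⟨E, h1, ?_, ?_⟩
    · have := FP.ldivL G L' (L2 ++ (.ty E :: R)) A B C hG (by simpa using h2)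
      simpa using this
    · intro g; have := h3 g
      simp only [cntL_append, cntL, cntT, cnt] at *; omega
  · have hh := List.append_eq_append_iff.1 h
    clear h
    rcases hh with ⟨G1, rfl, rfl⟩ | ⟨L2, rfl, rfl⟩
    · obtain ⟨w1, w2, w3⟩ := wb_split hG.wbal hW
      by_cases hn : G1 = []
      · subst hn
        obtain ⟨E, h1, h2, h3⟩ := ih2 L' (.ty B :: T2) R (by simp) (by simp) w3
        refine ⟨E, ?_, by simpa using h2, ?_⟩
        · simpa using FP.ldivL T1 [] T2 A B E hG (by simpa using h1)
        · intro g; have := h3 g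
          simp only [cntL_append, cntL, cntT, cnt] at *; omega
      obtain ⟨E1, a1, a2, a3⟩ := ih1 [] G1 T1 (by simp) hn w1
      obtain ⟨E2, b1, b2, b3⟩ := ih2 L' (.ty B :: T2) R (by simp) (by simp) w3
      refine ⟨.ldiv E1 E2, ?_, ?_, ?_⟩
      · apply FP.ldivR _ _ _ (by simp)
        simpa using FP.ldivL (.ty E1 :: T1) [] T2 A B E2 (by simpa using a2) (by simpa using b1)
      · simpa using FP.ldivL G1 L' R E1 E2 C a1 b2
      · intro g; have := a3 g; have := b3 g
        simp only [cntL_append, cntL, cntT, cnt] at *; omega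
    · have w : WB (L2 ++ (.ty B :: T2)) := by
        have := WB.to1 (T := G ++ [Tok.ty (LTy.ldiv A B)]) (L := L2) (R := T2) B
          (by simpa using hW) (hG.wbal.append (WB.ty _))
        exact this
      obtain ⟨E, h1, h2, h3⟩ := ih2 L (L2 ++ (.ty B :: T2)) R (by simp) (by simp) w
      refine ⟨E, ?_, h2, ?_⟩
      · simpa using FP.ldivL G L2 T2 A B E hG h1
      · intro g; have := h3 g
        simp only [cntL_append, cntL, cntT, cnt] at *; omega
  · have hh := List.append_eq_append_iff.1 h
    clear h
    rcases hh with ⟨b, rfl, rfl⟩ | ⟨a, rfl, h⟩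
    · obtain ⟨E, h1, h2, h3⟩ := ih1 b T R1 (by simp) hT hW
      refine ⟨E, h1, ?_, ?_⟩
      · simpa using FP.ldivL _ L' R' A B C h2 hp
      · intro g; have := h3 g
        simp only [cntL_append, cntL, cntT, cnt] at *; omega
    · have hh := List.append_eq_append_iff.1 h
      clear h
      rcases hh.symm with ⟨a2, rfl, rfl⟩ | ⟨G1, rfl, rfl⟩
      · -- T = a ++ a2, G = a2 ++ R1
        obtain ⟨w1, w2, w3⟩ := wb_split hW hG.wbal
        by_cases hn : a2 = []
        · subst hn
          obtain ⟨E, h1, h2, h3⟩ := ih2 L a (.ty B :: R') (by simp) (by simpa using hT) w1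
          refine ⟨E, by simpa using h1, ?_, ?_⟩
          · have := FP.ldivL R1 (L ++ [.ty E]) R' A B C hG (by simpa using h2)
            simp only [List.append_assoc, List.cons_append, List.nil_append] at this ⊢
            exact this
          · intro g; have := h3 g
            simp only [cntL_append, cntL, cntT, cnt] at *; omega
        obtain ⟨E1, a1, a2', a3⟩ := ih1 [] a2 R1 (by simp) hn w2
        by_cases hn' : a = []
        · subst hn'
          refine ⟨E1, by simpa using a1, ?_, ?_⟩
          · simpa using FP.ldivL _ L R' A B C a2' (by simpa using hp)
          · intro g; have := a3 g
            simp only [cntL_append, cntL, cntT, cnt] at *; omega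
        obtain ⟨E2, b1, b2, b3⟩ := ih2 L a (.ty B :: R') (by simp) hn' w1
        refine ⟨.mul E2 E1, FP.mulR _ _ _ _ b1 a1, ?_, ?_⟩
        · apply FP.mulL
          have := FP.ldivL (.ty E1 :: R1) (L ++ [.ty E2]) R' A B C (by simpa using a2')
            (by simpa using b2)
          simp only [List.append_assoc, List.cons_append, List.nil_append] at this ⊢
          exact this
        · intro g; have := a3 g; have := b3 g
          simp only [cntL_append, cntL, cntT, cnt] at *; omega
      · -- a = T ++ G1, R1 = G1 ++ G
        obtain ⟨E, h1, h2, h3⟩ := ih2 L T (G1 ++ (.ty B :: R')) (by simp) hT hW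
        refine ⟨E, h1, ?_, ?_⟩
        · simpa using FP.ldivL G (L ++ (.ty E :: G1)) R' A B C hG (by simpa using h2)
        · intro g; have := h3 g
          simp only [cntL_append, cntL, cntT, cnt] at *; omega

theorem interp_rdivL {G L' R' A B C} (hG : FP G A) (ih1 : Interp G A)
    (hp : FP (L' ++ (.ty B :: R')) C)
    (ih2 : Interp (L' ++ (.ty B :: R')) C) :
    Interp (L' ++ (.ty (.rdiv B A) :: (G ++ R'))) C := by
  intro L T R h hT hW
  have hh := split3 h
  clear h
  rcases hh with ⟨L2, rfl, h⟩ | ⟨T1, T2, rfl, rfl, h⟩ | ⟨R1, rfl, rfl⟩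
  · have hh := List.append_eq_append_iff.1 h
    clear h
    rcases hh with ⟨b, rfl, rfl⟩ | ⟨a, rfl, h⟩
    · -- L2 = G ++ b
      obtain ⟨E, h1, h2, h3⟩ := ih2 (L' ++ (.ty B :: b)) T R (by simp) hT hW
      refine ⟨E, h1, ?_, ?_⟩
      · simpa using FP.rdivL G L' (b ++ (.ty E :: R)) A B C hG (by simpa using h2)
      · intro g; have := h3 g
        simp only [cntL_append, cntL, cntT, cnt] at *; omega
    · -- G = L2 ++ a, T ++ R = a ++ R'
      have hh := List.append_eq_append_iff.1 h
      clear h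
      rcases hh with ⟨c, rfl, rfl⟩ | ⟨c, rfl, rfl⟩
      · -- a = T ++ c, R = c ++ R'
        obtain ⟨E, h1, h2, h3⟩ := ih1 L2 T c (by simp) hT hW
        refine ⟨E, h1, ?_, ?_⟩
        · simpa using FP.rdivL _ L' R' A B C h2 hp
        · intro g; have := h3 g
          simp only [cntL_append, cntL, cntT, cnt] at *; omega
      · -- T = a ++ c, R' = c ++ R
        obtain ⟨w1, w2, w3⟩ := wb_split hG.wbal hW
        by_cases hn : a = []
        · subst hn
          obtain ⟨E, h1, h2, h3⟩ := ih2 (L' ++ [.ty B]) c R (by simp) (by simpa using hT) w3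
          refine ⟨E, by simpa using h1, ?_, ?_⟩
          · simpa using FP.rdivL L2 L' (.ty E :: R) A B C (by simpa using hG) (by simpa using h2)
          · intro g; have := h3 g
            simp only [cntL_append, cntL, cntT, cnt] at *; omega
        obtain ⟨E1, a1, a2, a3⟩ := ih1 L2 a [] (by simp) hn w2
        by_cases hn' : c = []
        · subst hn'
          refine ⟨E1, by simpa using a1, ?_, ?_⟩
          · simpa using FP.rdivL _ L' R A B C a2 (by simpa using hp)
          · intro g; have := a3 g
            simp only [cntL_append, cntL, cntT, cnt] at *; omega
        obtain ⟨E2, b1, b2, b3⟩ := ih2 (L' ++ [.ty B]) c R (by simp) hn' w3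
        refine ⟨.mul E1 E2, FP.mulR _ _ _ _ a1 b1, ?_, ?_⟩
        · apply FP.mulL
          have := FP.rdivL (L2 ++ [.ty E1]) L' (.ty E2 :: R) A B C (by simpa using a2)
            (by simpa using b2)
          simp only [List.append_assoc, List.cons_append, List.nil_append] at this ⊢
          exact this
        · intro g; have := a3 g; have := b3 g
          simp only [cntL_append, cntL, cntT, cnt] at *; omega
  · have hh := List.append_eq_append_iff.1 h
    clear h
    rcases hh with ⟨c, rfl, rfl⟩ | ⟨G1, rfl, rfl⟩
    · -- T2 = G ++ c, R' = c ++ R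
      have w : WB (T1 ++ (.ty B :: c)) := by
        have := WB.to1 (T := [Tok.ty (LTy.rdiv B A)] ++ G) (L := T1) (R := c) B
          (by simpa using hW) ((WB.ty _).append hG.wbal)
        exact this
      obtain ⟨E, h1, h2, h3⟩ := ih2 L (T1 ++ (.ty B :: c)) R (by simp) (by simp) w
      refine ⟨E, ?_, h2, ?_⟩
      · simpa using FP.rdivL G T1 c A B E hG h1
      · intro g; have := h3 g
        simp only [cntL_append, cntL, cntT, cnt] at *; omega
    · -- G = T2 ++ G1, R = G1 ++ R'
      obtain ⟨w1, w2, w3⟩ := wb_split (P := T1 ++ [.ty (.rdiv B A)]) (Q := T2) (S := G1)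
        (by simpa using hW) hG.wbal
      rw [WB.append_ty] at w1
      obtain ⟨E2, b1, b2, b3⟩ := ih2 L (T1 ++ [.ty B]) R' (by simp) (by simp)
        ((WB.append_ty _).2 w1)
      by_cases hn : G1 = []
      · subst hn
        refine ⟨E2, ?_, by simpa using b2, ?_⟩
        · simpa using FP.rdivL T2 T1 [] A B E2 (by simpa using hG) (by simpa using b1)
        · intro g; have := b3 g
          simp only [cntL_append, cntL, cntT, cnt] at *; omega
      obtain ⟨E1, a1, a2, a3⟩ := ih1 T2 G1 [] (by simp) hn w3
      refine ⟨.rdiv E2 E1, ?_, ?_, ?_⟩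
      · apply FP.rdivR _ _ _ (by simp)
        simpa using FP.rdivL (T2 ++ [.ty E1]) T1 [] A B E2 (by simpa using a2) (by simpa using b1)
      · simpa using FP.rdivL G1 L R' E1 E2 C a1 b2
      · intro g; have := a3 g; have := b3 g
        simp only [cntL_append, cntL, cntT, cnt] at *; omega
  · obtain ⟨E, h1, h2, h3⟩ := ih2 L T (R1 ++ (.ty B :: R')) (by simp) hT hW
    refine ⟨E, h1, ?_, ?_⟩
    · simpa using FP.rdivL G (L ++ (.ty E :: R1)) R' A B C hG (by simpa using h2)
    · intro g; have := h3 g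
      simp only [cntL_append, cntL, cntT, cnt] at *; omega

theorem interp_mulR {G D A B} (hG : FP G A) (hD : FP D B) (ih1 : Interp G A) (ih2 : Interp D B) :
    Interp (G ++ D) (.mul A B) := by
  intro L T R h hT hW
  have hh := List.append_eq_append_iff.1 h
  clear h
  rcases hh with ⟨b, rfl, rfl⟩ | ⟨a, rfl, h⟩
  · obtain ⟨E, h1, h2, h3⟩ := ih2 b T R (by simp) hT hW
    refine ⟨E, h1, ?_, ?_⟩
    · simpa using FP.mulR _ _ _ _ hG h2
    · intro g; have := h3 g
      simp only [cntL_append, cntL, cntT, cnt] at *; omega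
  · have hh := List.append_eq_append_iff.1 h
    clear h
    rcases hh.symm with ⟨c, rfl, rfl⟩ | ⟨c, rfl, rfl⟩
    · -- T = a ++ c, D = c ++ R
      obtain ⟨w1, w2, w3⟩ := wb_split hW hD.wbal
      by_cases hn : c = []
      · subst hn
        obtain ⟨E, h1, h2, h3⟩ := ih1 L a [] (by simp) (by simpa using hT) w1
        refine ⟨E, by simpa using h1, ?_, ?_⟩
        · simpa using FP.mulR _ _ _ _ h2 hD
        · intro g; have := h3 g
          simp only [cntL_append, cntL, cntT, cnt] at *; omega
      obtain ⟨E2, b1, b2, b3⟩ := ih2 [] c R (by simp) hn w2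
      by_cases hn' : a = []
      · subst hn'
        refine ⟨E2, by simpa using b1, ?_, ?_⟩
        · simpa using FP.mulR _ _ _ _ hG b2
        · intro g; have := b3 g
          simp only [cntL_append, cntL, cntT, cnt] at *; omega
      obtain ⟨E1, a1, a2, a3⟩ := ih1 L a [] (by simp) hn' w1
      refine ⟨.mul E1 E2, FP.mulR _ _ _ _ a1 b1, ?_, ?_⟩
      · apply FP.mulL
        simpa using FP.mulR _ _ _ _ a2 b2
      · intro g; have := a3 g; have := b3 g
        simp only [cntL_append, cntL, cntT, cnt] at *; omega
    · obtain ⟨E, h1, h2, h3⟩ := ih1 L T c (by simp) hT hW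
      refine ⟨E, h1, ?_, ?_⟩
      · simpa using FP.mulR _ _ _ _ h2 hD
      · intro g; have := h3 g
        simp only [cntL_append, cntL, cntT, cnt] at *; omega

theorem wb_op_cl {i j : ℕ} {X : List (Tok LTy)} {s : List ℕ} (hX : WB X) :
    chk s (Tok.op i :: (X ++ (Tok.cl j :: []))) = if j = i then some s else none := by
  simp only [chk, chk_append, hX.chk]; simp [chk]

theorem interp_diaR {G A i} (hG : FP G A) (ih : Interp G A) :
    Interp (.op i :: (G ++ [.cl i])) (.dia i A) := by
  intro L T R h hT hW
  cases L with
  | nil =>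
    cases T with
    | nil => simp at hT
    | cons t T =>
      simp at h
      obtain ⟨rfl, h⟩ := h
      have hh := List.append_eq_append_iff.1 h
      clear h
      rcases hh with ⟨b, rfl, h2⟩ | ⟨a, rfl, h2⟩
      · have : b = [.cl i] ∧ R = [] := by
          cases b with
          | nil =>
            exfalso
            simp [WB, chk] at hW
            have := chk_frame _ _ _ [i] hG.wbal
            simp at this
            rw [this] at hW; simp at hW
          | cons x b => simp at h2; simp [h2]
        obtain ⟨rfl, rfl⟩ := this
        obtain ⟨E, h1, h2, h3⟩ := ih [] G [] (by simp) hG.na.1 hG.wbal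
        refine ⟨.dia i E, FP.diaR _ _ _ h1, ?_, ?_⟩
        · apply FP.diaL
          simpa using FP.diaR i _ _ h2
        · intro g; have := h3 g
          simp only [cntL_append, cntL, cntT, cnt] at *; omega
      · exfalso
        have h4 := hG.wbal
        unfold WB at h4 hW
        rw [chk_append] at h4
        obtain ⟨t, ht, h5⟩ := Option.bind_eq_some_iff.1 h4
        have := chk_frame _ _ _ [i] ht
        simp [chk] at hW this
        rw [this] at hW; simp at hW
  | cons l L =>
    simp at h
    obtain ⟨rfl, h⟩ := h
    rw [← List.append_assoc] at h
    rcases List.eq_nil_or_concat R with rfl | ⟨R', r, rfl⟩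
    · exfalso
      rcases List.eq_nil_or_concat T with rfl | ⟨T', t, rfl⟩
      · simp at hT
      · have h' : G ++ [Tok.cl i] = (L ++ T') ++ [t] := by simpa using h
        obtain ⟨h1, h2⟩ := List.append_inj' h' (by simp)
        simp at h2; subst h2
        obtain ⟨w1, w2, w3⟩ := wb_split (P := L) (Q := T') (S := [.cl i]) (h1 ▸ hG.wbal)
          (by simpa using hW)
        exact not_WB_cl w3
    · have h' : G ++ [Tok.cl i] = (L ++ (T ++ R')) ++ [r] := by simpa using h
      obtain ⟨h1, h2⟩ := List.append_inj' h' (by simp)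
      simp at h2; subst h2
      obtain ⟨E, h1, h2, h3⟩ := ih L T R' h1 hT hW
      refine ⟨E, h1, ?_, ?_⟩
      · simpa using FP.diaR i _ _ h2
      · intro g; have := h3 g
        simp only [cntL_append, cntL, cntT, cnt, List.concat_eq_append] at *; omega

theorem interp_boxL {i L' R' A C} (ih : Interp (L' ++ (.ty A :: R')) C) :
    Interp (L' ++ (.op i :: .ty (.box i A) :: .cl i :: R')) C := by
  intro L T R h hT hW
  have h' : (L' ++ [.op i]) ++ (.ty (.box i A) :: (.cl i :: R')) = L ++ (T ++ R) := by
    simpa using h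
  have hh := split3 h'
  clear h h'
  rcases hh with ⟨L2, rfl, h⟩ | ⟨T1, T2, rfl, h, h2⟩ | ⟨R1, rfl, h⟩
  · cases L2 with
    | nil =>
      exfalso
      cases T with
      | nil => simp at hT
      | cons t T => simp at h; rw [← h.1] at hW; exact not_WB_cl hW
    | cons l L2 =>
      simp at h; obtain ⟨rfl, rfl⟩ := h
      obtain ⟨E, h1, h2, h3⟩ := ih (L' ++ (.ty A :: L2)) T R (by simp) hT hW
      refine ⟨E, h1, ?_, ?_⟩
      · simpa using FP.boxL i L' (L2 ++ (.ty E :: R)) A C (by simpa using h2)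
      · intro g; have := h3 g
        simp only [cntL_append, cntL, cntT, cnt] at *; omega
  · have w1 : ∀ T3 j, T1 = T3 ++ [.op j] → T2 = [] → False := by
      rintro T3 j rfl rfl
      have hW' : WB ((T3 ++ [Tok.op j]) ++ [Tok.ty (.box i A)]) := hW
      rw [WB.append_ty] at hW'
      exact not_WB_op hW'
    rcases List.eq_nil_or_concat T1 with rfl | ⟨T3, t, rfl⟩
    · simp at h; subst h
      cases T2 with
      | nil =>
        simp at h2; subst h2
        obtain ⟨E, h1, h2, h3⟩ := ih L' [.ty A] R' (by simp) (by simp) (WB.ty _)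
        refine ⟨.box i E, ?_, ?_, ?_⟩
        · apply FP.boxR _ _ _ (WB.ty _)
          simpa using FP.boxL i [] [] A E (by simpa using h1)
        · simpa using FP.boxL i L' R' E C h2
        · intro g; have := h3 g
          simp only [cntL_append, cntL, cntT, cnt] at *; omega
      | cons t T2 =>
        exfalso
        simp at h2; rw [← h2.1] at hW; exact not_WB_cl (i := i) (X := T2) hW
    · have h4 : L' ++ [Tok.op i] = (L ++ T3) ++ [t] := by simpa using h
      obtain ⟨rfl, h5⟩ := List.append_inj' h4 (by simp)
      simp at h5; subst h5
      cases T2 with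
      | nil => exact (w1 T3 i (by simp) rfl).elim
      | cons t T2 =>
        simp at h2; obtain ⟨rfl, rfl⟩ := h2
        have w : WB (T3 ++ (.ty A :: T2)) :=
          WB.to1 (T := [.op i, .ty (.box i A), .cl i]) A (by simpa using hW) (by simp [WB, chk])
        obtain ⟨E, h1, h2, h3⟩ := ih L (T3 ++ (.ty A :: T2)) R (by simp) (by simp) w
        refine ⟨E, ?_, h2, ?_⟩
        · simpa using FP.boxL i T3 T2 A E h1
        · intro g; have := h3 g
          simp only [cntL_append, cntL, cntT, cnt, List.concat_eq_append] at *; omega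
  · rcases List.eq_nil_or_concat R1 with rfl | ⟨R3, t, rfl⟩
    · exfalso
      rcases List.eq_nil_or_concat T with rfl | ⟨T', t, rfl⟩
      · simp at hT
      · have h4 : L' ++ [Tok.op i] = (L ++ T') ++ [t] := by simpa using h
        obtain ⟨h1, h5⟩ := List.append_inj' h4 (by simp)
        simp at h5; subst h5
        exact not_WB_op (by simpa using hW)
    · have h4 : L' ++ [Tok.op i] = (L ++ (T ++ R3)) ++ [t] := by simpa using h
      obtain ⟨rfl, h5⟩ := List.append_inj' h4 (by simp)
      simp at h5; subst h5
      obtain ⟨E, h1, h2, h3⟩ := ih L T (R3 ++ (.ty A :: R')) (by simp) hT hW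
      refine ⟨E, h1, ?_, ?_⟩
      · simpa using FP.boxL i (L ++ (.ty E :: R3)) R' A C (by simpa using h2)
      · intro g; have := h3 g
        simp only [cntL_append, cntL, cntT, cnt, List.concat_eq_append] at *; omega

theorem interp {X C} (h : FP X C) : Interp X C := by
  induction h with
  | id p =>
    intro L T R h hT hW
    have : L = [] ∧ R = [] ∧ T = [.ty (.prim p)] := by
      cases T with
      | nil => simp at hT
      | cons t T =>
        have := congrArg List.length h
        simp at this
        have h1 : L = [] := List.eq_nil_of_length_eq_zero (by omega)
        have h2 : R = [] := List.eq_nil_of_length_eq_zero (by omega)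
        subst h1 h2
        simp at h
        simp [h]
    obtain ⟨rfl, rfl, rfl⟩ := this
    exact ⟨.prim p, FP.id p, FP.id p, fun g => by simp [cntL, cntT]⟩
  | ldivL G L R A B C h1 h2 ih1 ih2 => exact interp_ldivL h1 ih1 h2 ih2
  | rdivL G L R A B C h1 h2 ih1 ih2 => exact interp_rdivL h1 ih1 h2 ih2
  | ldivR X A B hx h ih =>
    intro L T R h hT hW
    subst h
    obtain ⟨E, h1, h2, h3⟩ := ih (.ty A :: L) T R (by simp) hT hW
    refine ⟨E, h1, FP.ldivR _ _ _ (by simp) h2, ?_⟩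
    intro g; have := h3 g
    simp only [cntL_append, cntL, cntT, cnt] at *; omega
  | rdivR X A B hx h ih =>
    intro L T R h hT hW
    subst h
    obtain ⟨E, h1, h2, h3⟩ := ih L T (R ++ [.ty A]) (by simp) hT hW
    refine ⟨E, h1, FP.rdivR _ _ _ (by simp) (by simpa using h2), ?_⟩
    intro g; have := h3 g
    simp only [cntL_append, cntL, cntT, cnt] at *; omega
  | mulL L R A B C h ih =>
    exact interp_tok (M := [.ty A, .ty B]) rfl (by simp) (fun L R D => FP.mulL L R A B D)
      (fun g => by simp [cntL, cntT, cnt]) ih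
  | mulR G D A B h1 h2 ih1 ih2 => exact interp_mulR h1 h2 ih1 ih2
  | diaL i L R A C h ih =>
    exact interp_tok (M := [.op i, .ty A, .cl i]) (by simp [WB, chk]) (by simp)
      (fun L R D => FP.diaL i L R A D)
      (fun g => by simp [cntL, cntT, cnt]; omega) ih
  | diaR i G A h ih => exact interp_diaR h ih
  | boxL i L R A C h ih => exact interp_boxL ih
  | boxR i G A hG h ih =>
    intro L T R h hT hW
    subst h
    obtain ⟨E, h1, h2, h3⟩ := ih (.op i :: L) T (R ++ [.cl i]) (by simp) hT hW
    refine ⟨E, h1, FP.boxR _ _ _ (WB.to1 E hG hW) (by simpa using h2), ?_⟩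
    intro g; have := h3 g
    simp only [cntL_append, cntL, cntT, cnt] at *; omega

/-! ## Semantic cut elimination -/

def emb : PTy → LTy
  | .prim p => .prim p
  | .ldiv A B => .ldiv (emb A) (emb B)
  | .rdiv B A => .rdiv (emb B) (emb A)
  | .mul A B => .mul (emb A) (emb B)
  | .dia A => .dia 0 (emb A)
  | .box A => .box 0 (emb A)

def tokm {α β : Type} (f : α → β) (g : ℕ → ℕ) : Tok α → Tok β
  | .ty a => .ty (f a)
  | .op i => .op (g i)
  | .cl i => .cl (g i)

mutual
def flatT : PTree → List (Tok PTy)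
  | .leaf A => [.ty A]
  | .node ts => .op 0 :: (flat ts ++ [.cl 0])
def flat : List PTree → List (Tok PTy)
  | [] => []
  | t :: ts => flatT t ++ flat ts
end

def cls (P : Set (List (Tok LTy))) : Set (List (Tok LTy)) :=
  {x | x ≠ [] ∧ WB x ∧ ∀ L R C, (∀ y ∈ P, FP (L ++ (y ++ R)) C) → FP (L ++ (x ++ R)) C}

def den : PTy → Set (List (Tok LTy))
  | .prim p => {x | FP x (.prim p)}
  | .ldiv A B => {x | x ≠ [] ∧ WB x ∧ ∀ a ∈ den A, a ++ x ∈ den B}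
  | .rdiv B A => {x | x ≠ [] ∧ WB x ∧ ∀ a ∈ den A, x ++ a ∈ den B}
  | .mul A B => cls {x | ∃ a ∈ den A, ∃ b ∈ den B, x = a ++ b}
  | .dia A => cls {x | ∃ a ∈ den A, x = .op 0 :: (a ++ [.cl 0])}
  | .box A => {x | x ≠ [] ∧ WB x ∧ .op 0 :: (x ++ [.cl 0]) ∈ den A}

theorem den_pos (A : PTy) : ∀ x ∈ den A, x ≠ [] ∧ WB x := by
  intro x hx
  cases A with
  | prim p => exact ⟨(FP.na hx).1, FP.wbal hx⟩
  | _ => exact ⟨hx.1, hx.2.1⟩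

theorem cls_cls (P : Set (List (Tok LTy))) : cls (cls P) ⊆ cls P := by
  intro x hx
  refine ⟨hx.1, hx.2.1, fun L R C h => hx.2.2 L R C fun y hy => hy.2.2 L R C h⟩

theorem den_cls (A : PTy) : cls (den A) ⊆ den A := by
  induction A with
  | prim p =>
    intro x hx
    have := hx.2.2 [] [] (.prim p) (by intro y hy; simpa [den] using hy)
    simpa [den] using this
  | ldiv A B _ ihB =>
    intro x hx
    refine ⟨hx.1, hx.2.1, fun a ha => ihB ⟨by simp [hx.1], (den_pos A a ha).2.append hx.2.1, ?_⟩⟩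
    intro L R C h
    have := hx.2.2 (L ++ a) R C (fun y hy => by simpa using h _ (hy.2.2 a ha))
    simpa using this
  | rdiv B A ihB _ =>
    intro x hx
    refine ⟨hx.1, hx.2.1, fun a ha => ihB ⟨by simp [hx.1], hx.2.1.append (den_pos A a ha).2, ?_⟩⟩
    intro L R C h
    have := hx.2.2 L (a ++ R) C (fun y hy => by simpa using h _ (hy.2.2 a ha))
    simpa using this
  | mul A B _ _ => exact cls_cls _
  | dia A _ => exact cls_cls _
  | box A ih =>
    intro x hx
    refine ⟨hx.1, hx.2.1, ih ⟨by simp, hx.2.1.brk 0, ?_⟩⟩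
    intro L R C h
    have := hx.2.2 (L ++ [.op 0]) (.cl 0 :: R) C (fun y hy => by simpa using h _ (hy.2.2))
    simpa using this

theorem den_main (A : PTy) : [Tok.ty (emb A)] ∈ den A ∧ ∀ x ∈ den A, FP x (emb A) := by
  induction A with
  | prim p => exact ⟨FP.id p, fun x hx => hx⟩
  | ldiv A B ihA ihB =>
    refine ⟨⟨by simp, WB.ty _, fun a ha => den_cls B ⟨by simp,
      (den_pos A a ha).2.append (WB.ty _), fun L R C h => ?_⟩⟩, fun x hx => ?_⟩
    · have := FP.ldivL a L R _ _ C (ihA.2 a ha) (by simpa using h _ ihB.1)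
      simpa [emb] using this
    · exact FP.ldivR _ _ _ hx.1 (ihB.2 _ (hx.2.2 _ ihA.1))
  | rdiv B A ihB ihA =>
    refine ⟨⟨by simp, WB.ty _, fun a ha => den_cls B ⟨by simp,
      (WB.ty _).append (den_pos A a ha).2, fun L R C h => ?_⟩⟩, fun x hx => ?_⟩
    · have := FP.rdivL a L R _ _ C (ihA.2 a ha) (by simpa using h _ ihB.1)
      simpa [emb] using this
    · exact FP.rdivR _ _ _ hx.1 (ihB.2 _ (hx.2.2 _ ihA.1))
  | mul A B ihA ihB =>
    refine ⟨⟨by simp, WB.ty _, fun L R C h => ?_⟩, fun x hx => ?_⟩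
    · exact FP.mulL _ _ _ _ _ (by simpa using h _ ⟨_, ihA.1, _, ihB.1, rfl⟩)
    · have := hx.2.2 [] [] (emb (.mul A B)) (by
        rintro y ⟨a, ha, b, hb, rfl⟩
        simpa [emb] using FP.mulR _ _ _ _ (ihA.2 a ha) (ihB.2 b hb))
      simpa using this
  | dia A ih =>
    refine ⟨⟨by simp, WB.ty _, fun L R C h => ?_⟩, fun x hx => ?_⟩
    · exact FP.diaL _ _ _ _ _ (by simpa using h _ ⟨_, ih.1, rfl⟩)
    · have := hx.2.2 [] [] (emb (.dia A)) (by
        rintro y ⟨a, ha, rfl⟩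
        simpa [emb] using FP.diaR 0 _ _ (ih.2 a ha))
      simpa using this
  | box A ih =>
    refine ⟨⟨by simp, WB.ty _, den_cls A ⟨by simp, (WB.ty _).brk 0, fun L R C h => ?_⟩⟩,
      fun x hx => ?_⟩
    · exact FP.boxL _ _ _ _ _ (by simpa using h _ ih.1)
    · exact FP.boxR _ _ _ hx.2.1 (ih.2 _ hx.2.2)

mutual
def instT : PTree → List (Tok LTy) → Prop
  | .leaf A, x => x ∈ den A
  | .node ts, x => ∃ y, instH ts y ∧ x = .op 0 :: (y ++ [.cl 0])
def instH : List PTree → List (Tok LTy) → Prop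
  | [], x => x = []
  | t :: ts, x => ∃ y z, instT t y ∧ instH ts z ∧ x = y ++ z
end

mutual
theorem instT_pos : ∀ (t : PTree) (x), instT t x → x ≠ [] ∧ WB x
  | .leaf A, x, h => den_pos A x (by simpa [instT] using h)
  | .node ts, x, h => by
    simp only [instT] at h
    obtain ⟨y, hy, rfl⟩ := h
    exact ⟨by simp, (instH_wb ts y hy).brk 0⟩
theorem instH_wb : ∀ (ts : List PTree) (x), instH ts x → WB x
  | [], x, h => by simp only [instH] at h; subst h; exact WB.nil
  | t :: ts, x, h => by
    simp only [instH] at h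
    obtain ⟨y, z, hy, hz, rfl⟩ := h
    exact (instT_pos t y hy).2.append (instH_wb ts z hz)
end

theorem instH_ne {G : PHedge} (hG : G ≠ []) {x} (h : instH G x) : x ≠ [] := by
  cases G with
  | nil => simp at hG
  | cons t ts =>
    simp only [instH] at h
    obtain ⟨y, z, hy, hz, rfl⟩ := h
    simp [(instT_pos t y hy).1]

theorem instH_append (G D : PHedge) : ∀ x, instH (G ++ D) x ↔
    ∃ y z, instH G y ∧ instH D z ∧ x = y ++ z := by
  induction G with
  | nil => intro x; simp [instH]
  | cons t G ih =>
    intro x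
    simp only [List.cons_append, instH, ih]
    constructor
    · rintro ⟨y, z, hy, ⟨u, v, hu, hv, rfl⟩, rfl⟩
      exact ⟨y ++ u, v, ⟨y, u, hy, hu, rfl⟩, hv, by simp⟩
    · rintro ⟨y, z, ⟨u, v, hu, hv, rfl⟩, hz, rfl⟩
      exact ⟨u, v ++ z, hu, ⟨v, z, hv, hz, rfl⟩, by simp⟩

theorem instH_one (t : PTree) (x) : instH [t] x ↔ instT t x := by
  simp [instH]

theorem instH_plug (D : PCtx) (Z : PHedge) : ∀ x, instH (D.plug Z) x →
    ∃ L R, (∃ z, instH Z z ∧ x = L ++ (z ++ R)) ∧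
      ∀ Z' z', instH Z' z' → instH (D.plug Z') (L ++ (z' ++ R)) := by
  induction D with
  | hole pre post =>
    intro x hx
    simp only [PCtx.plug, instH_append] at hx ⊢
    obtain ⟨y, z, ⟨u, v, hu, hv, rfl⟩, hz, rfl⟩ := hx
    exact ⟨u, z, ⟨v, hv, by simp⟩, fun Z' z' h => ⟨u ++ z', z, ⟨u, z', hu, h, rfl⟩, hz, by simp⟩⟩
  | brk c pre post ih =>
    intro x hx
    simp only [PCtx.plug, instH_append, instH, instT] at hx ⊢
    obtain ⟨y, z, hy, ⟨u, v, ⟨w, hw, rfl⟩, hv, rfl⟩, rfl⟩ := hx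
    obtain ⟨L, R, ⟨z, hz, rfl⟩, h⟩ := ih w hw
    refine ⟨y ++ (.op 0 :: L), R ++ (.cl 0 :: v), ⟨z, hz, by simp⟩, fun Z' z' h' => ?_⟩
    exact ⟨y, _, hy, ⟨_, v, ⟨_, h Z' z' h', rfl⟩, hv, rfl⟩, by simp⟩

theorem den_ctx {P C L z R} (h : ∀ y ∈ P, L ++ (y ++ R) ∈ den C) (hz : z ∈ cls P)
    (hw : WB (L ++ (z ++ R))) : L ++ (z ++ R) ∈ den C := by
  apply den_cls
  refine ⟨by simp [hz.1], hw, fun L' R' C' h' => ?_⟩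
  have := hz.2.2 (L' ++ L) (R ++ R') C' (fun y hy => by simpa using h' _ (h y hy))
  simpa using this

theorem sound {G C} (h : PProv G C) : ∀ x, instH G x → x ∈ den C := by
  induction h with
  | id p => intro x hx; simpa [instH, instT] using hx
  | ldivL G D A B C _ _ ih1 ih2 =>
    intro x hx
    obtain ⟨L, R, ⟨z, hz, rfl⟩, h⟩ := instH_plug _ _ _ hx
    simp only [instH_append, instH_one, instT] at hz
    obtain ⟨g, y, hg, hy, rfl⟩ := hz
    exact ih2 _ (h _ _ (by simpa [instH, instT] using hy.2.2 g (ih1 g hg)))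
  | ldivR Pi A B hn _ ih =>
    intro x hx
    exact ⟨instH_ne hn hx, instH_wb _ _ hx, fun a ha => ih _
      (by simp only [instH, instT]; exact ⟨a, x, ha, hx, rfl⟩)⟩
  | rdivL G D A B C _ _ ih1 ih2 =>
    intro x hx
    obtain ⟨L, R, ⟨z, hz, rfl⟩, h⟩ := instH_plug _ _ _ hx
    simp only [instH, instT] at hz
    obtain ⟨y, g, hy, hg, rfl⟩ := hz
    exact ih2 _ (h _ _ (by simpa [instH, instT] using hy.2.2 g (ih1 g hg)))
  | rdivR Pi A B hn _ ih =>
    intro x hx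
    exact ⟨instH_ne hn hx, instH_wb _ _ hx, fun a ha => ih _
      (by simp only [instH_append, instH_one, instT]; exact ⟨x, a, hx, ha, rfl⟩)⟩
  | mulL G A B C _ ih =>
    intro x hx
    have hw := instH_wb _ _ hx
    obtain ⟨L, R, ⟨z, hz, rfl⟩, h⟩ := instH_plug _ _ _ hx
    simp only [instH_one, instT] at hz
    refine den_ctx ?_ hz hw
    rintro y ⟨a, ha, b, hb, rfl⟩
    exact ih _ (h _ _ (by simp only [instH, instT]; exact ⟨a, b, ha, ⟨b, [], hb, rfl, by simp⟩, rfl⟩))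
  | mulR G D A B _ _ ih1 ih2 =>
    intro x hx
    have hw := instH_wb _ _ hx
    simp only [instH_append] at hx
    obtain ⟨y, z, hy, hz, rfl⟩ := hx
    refine ⟨by simp [(den_pos _ _ (ih1 _ hy)).1], hw, fun L R C h => h _ ?_⟩
    exact ⟨y, ih1 _ hy, z, ih2 _ hz, rfl⟩
  | diaL G A B _ ih =>
    intro x hx
    have hw := instH_wb _ _ hx
    obtain ⟨L, R, ⟨z, hz, rfl⟩, h⟩ := instH_plug _ _ _ hx
    simp only [instH_one, instT] at hz
    refine den_ctx ?_ hz hw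
    rintro y ⟨a, ha, rfl⟩
    exact ih _ (h _ _ (by simp only [instH_one, instT]; exact ⟨a, ha, rfl⟩))
  | diaR G A _ ih =>
    intro x hx
    have hw := instH_wb _ _ hx
    simp only [instH_one, instT] at hx
    obtain ⟨y, hy, rfl⟩ := hx
    exact ⟨by simp, hw, fun L R C h => h _ ⟨y, ih _ hy, rfl⟩⟩
  | boxL G A B _ ih =>
    intro x hx
    obtain ⟨L, R, ⟨z, hz, rfl⟩, h⟩ := instH_plug _ _ _ hx
    simp only [instH_one, instT] at hz
    obtain ⟨y, hy, rfl⟩ := hz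
    exact ih _ (h _ _ (by simpa [instH, instT] using hy.2.2))
  | boxR G A _ ih =>
    intro x hx
    have h1 := ih (.op 0 :: (x ++ [.cl 0])) (by simp only [instH_one, instT]; exact ⟨x, hx, rfl⟩)
    refine ⟨?_, instH_wb _ _ hx, h1⟩
    rintro rfl
    have := ((den_main A).2 _ h1).na.2
    simp [NA, adjOK] at this
  | cut G D A B _ _ ih1 ih2 =>
    intro x hx
    obtain ⟨L, R, ⟨z, hz, rfl⟩, h⟩ := instH_plug _ _ _ hx
    exact ih2 _ (h _ _ (by simpa only [instH_one, instT] using ih1 _ hz))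

mutual
theorem inst_flatT : ∀ t : PTree, instT t ((flatT t).map (tokm emb (fun i => i)))
  | .leaf A => by simpa [instT, flatT, tokm] using (den_main A).1
  | .node ts => by
    simp only [instT, flatT]
    exact ⟨_, inst_flat ts, by simp [tokm]⟩
theorem inst_flat : ∀ ts : List PTree, instH ts ((flat ts).map (tokm emb (fun i => i)))
  | [] => by simp [instH, flat]
  | t :: ts => by
    simp only [instH, flat]
    exact ⟨_, _, inst_flatT t, inst_flat ts, by simp⟩
end

theorem cutElim {G C} (h : PProv G C) : FP ((flat G).map (tokm emb (fun i => i))) (emb C) :=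
  (den_main C).2 _ (sound h _ (inst_flat G))

set_option linter.unusedSimpArgs false
/-! ## Thinning -/

def ren (f g : ℕ → ℕ) : LTy → LTy
  | .prim p => .prim (f p)
  | .ldiv A B => .ldiv (ren f g A) (ren f g B)
  | .rdiv B A => .rdiv (ren f g B) (ren f g A)
  | .mul A B => .mul (ren f g A) (ren f g B)
  | .dia i A => .dia (g i) (ren f g A)
  | .box i A => .box (g i) (ren f g A)

abbrev rt (f g : ℕ → ℕ) : Tok LTy → Tok LTy := tokm (ren f g) g

theorem ren_ren (f g f' g' : ℕ → ℕ) (A : LTy) :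
    ren f g (ren f' g' A) = ren (fun n => f (f' n)) (fun n => g (g' n)) A := by
  induction A <;> simp_all [ren]

theorem rt_rt (f g f' g' : ℕ → ℕ) (X : List (Tok LTy)) :
    (X.map (rt f' g')).map (rt f g) = X.map (rt (fun n => f (f' n)) (fun n => g (g' n))) := by
  rw [List.map_map]
  apply List.map_congr_left
  intro t _
  cases t <;> simp [tokm, ren_ren]

theorem chk_ren {α β : Type} (φ : α → β) (g : ℕ → ℕ) (X : List (Tok α)) :
    ∀ s t, chk s X = some t → chk (s.map g) (X.map (tokm φ g)) = some (t.map g) := by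
  induction X with
  | nil => intro s t h; simp_all [chk]
  | cons a X ih =>
    intro s t h
    cases a with
    | ty a => exact ih _ _ h
    | op i => exact ih (i :: s) _ h
    | cl i =>
      cases s with
      | nil => simp [chk] at h
      | cons j s =>
        simp only [chk] at h
        split_ifs at h with hij
        subst hij
        simpa [chk, tokm] using ih _ _ h

theorem WB.ren {α β : Type} (φ : α → β) (g : ℕ → ℕ) {X : List (Tok α)} (h : WB X) :
    WB (X.map (tokm φ g)) := chk_ren φ g X [] [] h

theorem chk_back {α β : Type} (φ : α → β) (g : ℕ → ℕ) (u : List ℕ) (X : List (Tok α)) :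
    ∀ s t s2, chk (s ++ u) X = some t → chk (s.map g) (X.map (tokm φ g)) = some s2 →
      ∃ s', chk s X = some s' ∧ t = s' ++ u ∧ s'.map g = s2 := by
  induction X with
  | nil => intro s t s2 h h2; simp_all [chk]
  | cons a X ih =>
    intro s t s2 h h2
    cases a with
    | ty a => exact ih _ _ _ h h2
    | op i => exact ih (i :: s) _ _ h h2
    | cl i =>
      cases s with
      | nil => simp [chk, tokm] at h2
      | cons j s =>
        simp only [chk, List.cons_append] at h
        split_ifs at h with hij
        subst hij
        simp only [chk, tokm, List.map_cons, if_true] at h2 ⊢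
        exact ih _ _ _ h h2

theorem FP.ren (f g : ℕ → ℕ) {X C} (h : FP X C) : FP (X.map (rt f g)) (_root_.ren f g C) := by
  induction h with
  | id p => exact FP.id _
  | ldivL G L R A B C _ _ ih1 ih2 =>
    simp only [List.map_append, List.map_cons, tokm, _root_.ren] at *
    exact FP.ldivL _ _ _ _ _ _ ih1 ih2
  | ldivR X A B hx _ ih => exact FP.ldivR _ _ _ (by simpa using hx) ih
  | rdivL G L R A B C _ _ ih1 ih2 =>
    simp only [List.map_append, List.map_cons, tokm, _root_.ren] at *
    exact FP.rdivL _ _ _ _ _ _ ih1 ih2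
  | rdivR X A B hx _ ih =>
    exact FP.rdivR _ _ _ (by simpa using hx) (by simpa [tokm] using ih)
  | mulL L R A B C _ ih =>
    simp only [List.map_append, List.map_cons, tokm, _root_.ren] at *
    exact FP.mulL _ _ _ _ _ ih
  | mulR G D A B _ _ ih1 ih2 =>
    simp only [List.map_append]
    exact FP.mulR _ _ _ _ ih1 ih2
  | diaL i L R A C _ ih =>
    simp only [List.map_append, List.map_cons, tokm, _root_.ren] at *
    exact FP.diaL _ _ _ _ _ ih
  | diaR i G A _ ih =>
    simp only [List.map_append, List.map_cons, tokm, _root_.ren, List.map_nil] at *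
    exact FP.diaR _ _ _ ih
  | boxL i L R A C _ ih =>
    simp only [List.map_append, List.map_cons, tokm, _root_.ren] at *
    exact FP.boxL _ _ _ _ _ ih
  | boxR i G A hG hp ih =>
    simp only [List.map_append, List.map_cons, tokm, _root_.ren, List.map_nil] at *
    exact FP.boxR _ _ _ (hG.ren _ _) ih

def genm (f g : ℕ → ℕ) : Gen → Gen
  | .p n => .p (f n)
  | .o n => .o (g n)
  | .c n => .c (g n)

theorem cnt_ren_inj {f g : ℕ → ℕ} (hf : Function.Injective f) (hg : Function.Injective g)
    (h : Gen) (A : LTy) : cnt (genm f g h) (ren f g A) = cnt h A := by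
  induction A with
  | prim p => cases h <;> simp [cnt, ren, one, genm, hf.eq_iff]
  | dia i A ih => cases h <;> simp_all [cnt, ren, one, genm, hg.eq_iff]
  | box i A ih => cases h <;> simp_all [cnt, ren, one, genm, hg.eq_iff]
  | _ => simp_all [cnt, ren]

theorem cntL_ren_inj {f g : ℕ → ℕ} (hf : Function.Injective f) (hg : Function.Injective g)
    (h : Gen) (X : List (Tok LTy)) : cntL (genm f g h) (X.map (rt f g)) = cntL h X := by
  induction X with
  | nil => rfl
  | cons t X ih =>
    cases t with
    | ty A => simp [cntL, ih, cntT, tokm, cnt_ren_inj hf hg]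
    | op i =>
      rw [List.map_cons, cntL, cntL, ih]
      cases h <;> simp [cntT, tokm, one, genm, hg.eq_iff]
    | cl i =>
      rw [List.map_cons, cntL, cntL, ih]
      cases h <;> simp [cntT, tokm, one, genm, hg.eq_iff]

theorem cnt_ren_out {f g : ℕ → ℕ} (h : Gen) (hh : ∀ h', genm f g h' ≠ h) (A : LTy) :
    cnt h (ren f g A) = 0 := by
  have h1 := fun n => hh (.p n)
  have h2 := fun n => hh (.o n)
  have h3 := fun n => hh (.c n)
  simp only [genm] at h1 h2 h3
  induction A with
  | prim p => simp [cnt, ren, one, (h1 _).symm]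
  | dia i A ih => simp [cnt, ren, one, ih, (h2 _).symm, (h3 _).symm]
  | box i A ih => simp [cnt, ren, one, ih, (h2 _).symm, (h3 _).symm]
  | _ => simp_all [cnt, ren]

theorem cntL_ren_out {f g : ℕ → ℕ} (h : Gen) (hh : ∀ h', genm f g h' ≠ h) (X : List (Tok LTy)) :
    cntL h (X.map (rt f g)) = 0 := by
  have h2 := fun n => hh (.o n)
  have h3 := fun n => hh (.c n)
  simp only [genm] at h2 h3
  induction X with
  | nil => rfl
  | cons t X ih =>
    cases t with
    | ty A => simp [cntL, ih, cntT, tokm, cnt_ren_out h hh]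
    | op i => simp [cntL, ih, cntT, tokm, one, (h2 _).symm]
    | cl i => simp [cntL, ih, cntT, tokm, one, (h3 _).symm]

def Thin (X : List (Tok LTy)) (C : LTy) : Prop := ∀ h, cntL h X + cnt h C ≤ 2

def Thins (X : List (Tok LTy)) (C : LTy) : Prop :=
  ∃ f g X' C', FP X' C' ∧ X'.map (rt f g) = X ∧ ren f g C' = C ∧ Thin X' C'

theorem thins_fresh {X C} (i : ℕ) (h : Thins X C) :
    ∃ f g X' C', FP X' C' ∧ X'.map (rt f g) = X ∧ ren f g C' = C ∧ Thin X' C' ∧ g 0 = i ∧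
      (∀ h, h = .o 0 ∨ h = .c 0 → cntL h X' + cnt h C' = 0) := by
  obtain ⟨f, g, X', C', h1, h2, h3, h4⟩ := h
  have hi : Function.Injective (fun n : ℕ => n) := fun _ _ h => h
  have hs : Function.Injective Nat.succ := Nat.succ_injective
  refine ⟨f, fun n => Nat.casesOn n i g, X'.map (rt (fun n => n) Nat.succ),
    ren (fun n => n) Nat.succ C', h1.ren _ _, ?_, ?_, ?_, rfl, ?_⟩
  · rw [rt_rt, ← h2]
  · rw [ren_ren, ← h3]
  · intro h
    by_cases hh : ∃ h', genm (fun n => n) Nat.succ h' = h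
    · obtain ⟨h', rfl⟩ := hh
      rw [cntL_ren_inj hi hs, cnt_ren_inj hi hs]; exact h4 h'
    · rw [cntL_ren_out h (by simpa using hh), cnt_ren_out h (by simpa using hh)]; simp
  · intro h hh
    have : ∀ h', genm (fun n => n) Nat.succ h' ≠ h := by
      intro h'
      rcases hh with rfl | rfl <;> cases h' <;> simp [genm]
    rw [cntL_ren_out h this, cnt_ren_out h this]

theorem thins_two {X A Y C} (h : Thins X A) (k : Thins Y C) :
    ∃ f g X' A' Y' C', (FP X' A' ∧ X'.map (rt f g) = X ∧ ren f g A' = A) ∧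
      (FP Y' C' ∧ Y'.map (rt f g) = Y ∧ ren f g C' = C) ∧
      ∀ h, (cntL h X' + cnt h A') + (cntL h Y' + cnt h C') ≤ 2 := by
  obtain ⟨f1, g1, X', A', h1, h2, h3, h4⟩ := h
  obtain ⟨f2, g2, Y', C', k1, k2, k3, k4⟩ := k
  have hi : Function.Injective (fun n : ℕ => 2 * n) := fun a b h => by simpa using h
  have hs : Function.Injective (fun n : ℕ => 2 * n + 1) := fun a b h => by simpa using h
  have e1 : ∀ n : ℕ, (2 * n) % 2 = 0 := by intro n; omega
  have e2 : ∀ n : ℕ, (2 * n + 1) % 2 ≠ 0 := by intro n; omega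
  have e3 : ∀ n : ℕ, (2 * n) / 2 = n := by intro n; omega
  have e4 : ∀ n : ℕ, (2 * n + 1) / 2 = n := by intro n; omega
  refine ⟨fun n => if n % 2 = 0 then f1 (n / 2) else f2 (n / 2),
    fun n => if n % 2 = 0 then g1 (n / 2) else g2 (n / 2),
    X'.map (rt (fun n => 2 * n) (fun n => 2 * n)), ren (fun n => 2 * n) (fun n => 2 * n) A',
    Y'.map (rt (fun n => 2 * n + 1) (fun n => 2 * n + 1)),
    ren (fun n => 2 * n + 1) (fun n => 2 * n + 1) C',
    ⟨h1.ren _ _, ?_, ?_⟩, ⟨k1.ren _ _, ?_, ?_⟩, ?_⟩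
  · rw [rt_rt, ← h2]; simp only [e1, e3, if_true]
  · rw [ren_ren, ← h3]; simp only [e1, e3, if_true]
  · rw [rt_rt, ← k2]; simp only [e2, e4, if_false]
  · rw [ren_ren, ← k3]; simp only [e2, e4, if_false]
  · intro h
    by_cases hh : ∃ h', genm (fun n => 2 * n) (fun n => 2 * n) h' = h
    · obtain ⟨h', rfl⟩ := hh
      have ho : ∀ h'', genm (fun n => 2 * n + 1) (fun n => 2 * n + 1) h'' ≠
          genm (fun n => 2 * n) (fun n => 2 * n) h' := by
        intro h''
        cases h' <;> cases h'' <;> simp [genm] <;> omega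
      rw [cntL_ren_inj hi hi, cnt_ren_inj hi hi, cntL_ren_out _ ho, cnt_ren_out _ ho]
      exact h4 h'
    · rw [cntL_ren_out h (by simpa using hh), cnt_ren_out h (by simpa using hh)]
      by_cases hh : ∃ h', genm (fun n => 2 * n + 1) (fun n => 2 * n + 1) h' = h
      · obtain ⟨h', rfl⟩ := hh
        rw [cntL_ren_inj hs hs, cnt_ren_inj hs hs]
        simpa using k4 h'
      · rw [cntL_ren_out h (by simpa using hh), cnt_ren_out h (by simpa using hh)]; simp

theorem tokm_ty {α β : Type} {φ : α → β} {g t B} (h : tokm φ g t = .ty B) :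
    ∃ B', t = .ty B' ∧ φ B' = B := by
  cases t <;> simp_all [tokm]

theorem tokm_op {α β : Type} {φ : α → β} {g t i} (h : tokm φ g t = .op i) :
    ∃ j, t = .op j ∧ g j = i := by
  cases t <;> simp_all [tokm]

theorem tokm_cl {α β : Type} {φ : α → β} {g t i} (h : tokm φ g t = .cl i) :
    ∃ j, t = .cl j ∧ g j = i := by
  cases t <;> simp_all [tokm]

theorem map_mid {α β : Type} {φ : α → β} {g X L R B}
    (h : X.map (tokm φ g) = L ++ (.ty B :: R)) :
    ∃ L' B' R', X = L' ++ (.ty B' :: R') ∧ L'.map (tokm φ g) = L ∧ R'.map (tokm φ g) = R ∧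
      φ B' = B := by
  obtain ⟨L', Y, rfl, h1, h2⟩ := List.map_eq_append_iff.1 h
  obtain ⟨t, R', rfl, h3, h4⟩ := List.map_eq_cons_iff.1 h2
  obtain ⟨B', rfl, h5⟩ := tokm_ty h3
  exact ⟨L', B', R', rfl, h1, h4, h5⟩

theorem thinning {X C} (h : FP X C) : Thins X C := by
  induction h with
  | id p =>
    refine ⟨fun n => n, fun n => n, _, _, FP.id p, rfl, rfl, ?_⟩
    intro h; simp only [cntL, cntT, cnt, one]; split_ifs <;> simp
  | ldivL G L R A B C _ _ ih1 ih2 =>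
    obtain ⟨f, g, X', A', Y', C', ⟨h1, h2, h3⟩, ⟨k1, k2, k3⟩, h4⟩ := thins_two ih1 ih2
    obtain ⟨L', B', R', rfl, h6, h7, h8⟩ := map_mid k2
    refine ⟨f, g, _, _, FP.ldivL _ _ _ _ _ _ h1 k1, ?_, k3, ?_⟩
    · simp only [List.map_append, List.map_cons, tokm, ren, *]
    · intro h; have := h4 h
      simp only [cntL_append, cntL, cntT, cnt] at *; omega
  | rdivL G L R A B C _ _ ih1 ih2 =>
    obtain ⟨f, g, X', A', Y', C', ⟨h1, h2, h3⟩, ⟨k1, k2, k3⟩, h4⟩ := thins_two ih1 ih2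
    obtain ⟨L', B', R', rfl, h6, h7, h8⟩ := map_mid k2
    refine ⟨f, g, _, _, FP.rdivL _ _ _ _ _ _ h1 k1, ?_, k3, ?_⟩
    · simp only [List.map_append, List.map_cons, tokm, ren, *]
    · intro h; have := h4 h
      simp only [cntL_append, cntL, cntT, cnt] at *; omega
  | ldivR X A B hx _ ih =>
    obtain ⟨f, g, X', C', h1, h2, h3, h4⟩ := ih
    obtain ⟨L', A', R', rfl, h6, h7, h8⟩ := map_mid (L := []) h2
    obtain rfl : L' = [] := by simpa using h6
    refine ⟨f, g, _, _, FP.ldivR _ _ _ ?_ h1, h7, by simp [ren, *], ?_⟩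
    · rintro rfl; exact hx (by simpa using h7.symm)
    · intro h; have := h4 h
      simp only [List.nil_append, cntL, cntT, cnt] at *; omega
  | rdivR X A B hx _ ih =>
    obtain ⟨f, g, X', C', h1, h2, h3, h4⟩ := ih
    obtain ⟨L', A', R', rfl, h6, h7, h8⟩ := map_mid h2
    obtain rfl : R' = [] := by simpa using h7
    refine ⟨f, g, _, _, FP.rdivR _ _ _ ?_ h1, h6, by simp [ren, *], ?_⟩
    · rintro rfl; exact hx (by simpa using h6.symm)
    · intro h; have := h4 h
      simp only [cntL_append, cntL, cntT, cnt] at *; omega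
  | mulL L R A B C _ ih =>
    obtain ⟨f, g, X', C', h1, h2, h3, h4⟩ := ih
    obtain ⟨L', A', R', rfl, h6, h7, h8⟩ := map_mid h2
    obtain ⟨L'', B', R'', rfl, h6', h7', h8'⟩ := map_mid (L := []) h7
    obtain rfl : L'' = [] := by simpa using h6'
    refine ⟨f, g, _, _, FP.mulL _ _ _ _ _ h1, ?_, h3, ?_⟩
    · simp only [List.map_append, List.map_cons, tokm, ren, *]
    · intro h; have := h4 h
      simp only [cntL_append, cntL, cntT, cnt, List.nil_append] at *; omega
  | mulR G D A B _ _ ih1 ih2 =>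
    obtain ⟨f, g, X', A', Y', C', ⟨h1, h2, h3⟩, ⟨k1, k2, k3⟩, h4⟩ := thins_two ih1 ih2
    refine ⟨f, g, _, _, FP.mulR _ _ _ _ h1 k1, by simp [*], by simp [ren, *], ?_⟩
    intro h; have := h4 h
    simp only [cntL_append, cntL, cntT, cnt] at *; omega
  | diaL i L R A C _ ih =>
    obtain ⟨f, g, X', C', h1, h2, h3, h4⟩ := ih
    obtain ⟨L', Y, rfl, h6, h7⟩ := List.map_eq_append_iff.1 h2
    obtain ⟨t, R', rfl, h8, h9⟩ := List.map_eq_cons_iff.1 h7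
    obtain ⟨j, rfl, h10⟩ := tokm_op h8
    obtain ⟨t, R', rfl, h11, h12⟩ := List.map_eq_cons_iff.1 h9
    obtain ⟨A', rfl, h13⟩ := tokm_ty h11
    obtain ⟨t, R', rfl, h14, h15⟩ := List.map_eq_cons_iff.1 h12
    obtain ⟨k, rfl, h16⟩ := tokm_cl h14
    have hjk : k = j := by
      have := h1.wbal
      unfold WB at this
      rw [chk_append] at this
      obtain ⟨t, ht, h2⟩ := Option.bind_eq_some_iff.1 this
      simp only [chk] at h2
      split_ifs at h2; assumption
    subst hjk
    refine ⟨f, g, _, _, FP.diaL _ _ _ _ _ h1, ?_, h3, ?_⟩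
    · simp only [List.map_append, List.map_cons, tokm, ren, *]
    · intro h; have := h4 h
      simp only [cntL_append, cntL, cntT, cnt] at *; omega
  | diaR i G A _ ih =>
    obtain ⟨f, g, X', C', h1, h2, h3, h4, h5, h6⟩ := thins_fresh i ih
    refine ⟨f, g, _, _, FP.diaR 0 _ _ h1, by simp [tokm, *], by simp [ren, *], ?_⟩
    intro h; have a1 := h4 h; have a2 := h6 h
    simp only [cntL_append, cntL, cntT, cnt, one] at *
    split_ifs
    · subst h; simp_all
    all_goals simp_all
  | boxL i L R A C _ ih =>
    obtain ⟨f, g, X', C', h1, h2, h3, h4, h5, h6⟩ := thins_fresh i ih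
    obtain ⟨L', A', R', rfl, h7, h8, h9⟩ := map_mid h2
    refine ⟨f, g, _, _, FP.boxL 0 _ _ _ _ h1, by simp [tokm, ren, *], h3, ?_⟩
    intro h; have a1 := h4 h; have a2 := h6 h
    simp only [cntL_append, cntL, cntT, cnt, one] at *
    split_ifs
    · subst h; simp_all
    all_goals simp_all
  | boxR i G A hG hp ih =>
    obtain ⟨f, g, X', C', h1, h2, h3, h4⟩ := ih
    obtain ⟨t, R', rfl, h8, h9⟩ := List.map_eq_cons_iff.1 h2
    obtain ⟨j, rfl, h10⟩ := tokm_op h8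
    obtain ⟨G', Y, rfl, h6, h7⟩ := List.map_eq_append_iff.1 h9
    obtain ⟨t, R', rfl, h14, h15⟩ := List.map_eq_cons_iff.1 h7
    obtain rfl : R' = [] := by simpa using h15
    obtain ⟨k, rfl, h16⟩ := tokm_cl h14
    have hw := h1.wbal
    unfold WB at hw
    simp only [chk, chk_append] at hw
    obtain ⟨t, ht, hw2⟩ := Option.bind_eq_some_iff.1 hw
    rw [← h6] at hG
    obtain ⟨s', a1, a2, a3⟩ := chk_back (ren f g) g [j] G' [] t [] ht hG
    obtain rfl : s' = [] := by simpa using a3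
    subst a2
    have hjk : k = j := by
      simp only [chk, List.nil_append] at hw2
      split_ifs at hw2; assumption
    subst hjk
    refine ⟨f, g, _, _, FP.boxR _ _ _ a1 h1, h6, by simp [ren, *], ?_⟩
    intro h; have := h4 h
    simp only [cntL_append, cntL, cntT, cnt] at *; omega

/-! ## Free groups -/

abbrev FG := FreeGroup Gen

def lw : LTy → List (Gen × Bool)
  | .prim p => [(.p p, true)]
  | .ldiv A B => FreeGroup.invRev (lw A) ++ lw B
  | .rdiv B A => lw B ++ FreeGroup.invRev (lw A)
  | .mul A B => lw A ++ lw B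
  | .dia i A => (.o i, true) :: (lw A ++ [(.c i, true)])
  | .box i A => (.o i, false) :: (lw A ++ [(.c i, false)])

def gv (A : LTy) : FG := FreeGroup.mk (lw A)

theorem mk_cons (a : Gen × Bool) (L : List (Gen × Bool)) :
    FreeGroup.mk (a :: L) = FreeGroup.mk [a] * FreeGroup.mk L := by
  simp [FreeGroup.mul_mk]

theorem mk_true (a : Gen) : FreeGroup.mk [(a, true)] = FreeGroup.of a := rfl
theorem mk_false (a : Gen) : FreeGroup.mk [(a, false)] = (FreeGroup.of a)⁻¹ := rfl

@[simp] theorem gv_ldiv (A B) : gv (.ldiv A B) = (gv A)⁻¹ * gv B := by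
  simp [gv, lw, ← FreeGroup.mul_mk]
@[simp] theorem gv_rdiv (A B) : gv (.rdiv B A) = gv B * (gv A)⁻¹ := by
  simp [gv, lw, ← FreeGroup.mul_mk]
@[simp] theorem gv_mul (A B) : gv (.mul A B) = gv A * gv B := by
  simp [gv, lw, ← FreeGroup.mul_mk]
@[simp] theorem gv_dia (i A) : gv (.dia i A) = .of (.o i) * gv A * .of (.c i) := by
  rw [gv, lw, mk_cons, ← FreeGroup.mul_mk, mk_true, mk_true, gv, mul_assoc]
@[simp] theorem gv_box (i A) : gv (.box i A) = (.of (.o i))⁻¹ * gv A * (.of (.c i))⁻¹ := by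
  rw [gv, lw, mk_cons, ← FreeGroup.mul_mk, mk_false, mk_false, gv, mul_assoc]

def tv : Tok LTy → FG
  | .ty A => gv A
  | .op i => .of (.o i)
  | .cl i => .of (.c i)

def pv : List (Tok LTy) → FG
  | [] => 1
  | t :: X => tv t * pv X

@[simp] theorem pv_append (X Y) : pv (X ++ Y) = pv X * pv Y := by
  induction X with
  | nil => simp [pv]
  | cons t X ih => simp [pv, ih, mul_assoc]

theorem FP.val {X C} (h : FP X C) : pv X = gv C := by
  induction h with
  | id p => simp [pv, tv]
  | ldivL G L R A B C _ _ ih1 ih2 =>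
    simp only [pv_append, pv, tv, gv_ldiv] at *
    rw [ih1, ← ih2]; group
  | ldivR X A B hx _ ih => simp only [pv, tv, gv_ldiv] at *; rw [← ih]; group
  | rdivL G L R A B C _ _ ih1 ih2 =>
    simp only [pv_append, pv, tv, gv_rdiv] at *
    rw [ih1, ← ih2]; group
  | rdivR X A B hx _ ih => simp only [pv_append, pv, tv, gv_rdiv] at *; rw [← ih]; group
  | mulL L R A B C _ ih => simp only [pv_append, pv, tv, gv_mul] at *; rw [← ih]; group
  | mulR G D A B _ _ ih1 ih2 => simp only [pv_append, gv_mul] at *; rw [ih1, ih2]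
  | diaL i L R A C _ ih => simp only [pv_append, pv, tv, gv_dia] at *; rw [← ih]; group
  | diaR i G A _ ih => simp only [pv_append, pv, tv, gv_dia] at *; rw [← ih]; group
  | boxL i L R A C _ ih => simp only [pv_append, pv, tv, gv_box] at *; rw [← ih]; group
  | boxR i G A hG hp ih => simp only [pv_append, pv, tv, gv_box] at *; rw [← ih]; group

theorem cnt_eq (g : Gen) (A : LTy) : cnt g A = ((lw A).map Prod.fst).count g := by
  have hinv : ∀ L : List (Gen × Bool),
      ((FreeGroup.invRev L).map Prod.fst).count g = (L.map Prod.fst).count g := by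
    intro L
    simp [FreeGroup.invRev, List.map_reverse, List.count_reverse, Function.comp_def]
  have h1 : ∀ a : Gen, one g a = if a = g then 1 else 0 := by
    intro a; simp [one, eq_comm]
  induction A with
  | prim p => simp [cnt, lw, List.count_cons, h1]
  | ldiv A B ih1 ih2 => simp only [cnt, lw, List.map_append, List.count_append, hinv, ih1, ih2]
  | rdiv A B ih1 ih2 => simp only [cnt, lw, List.map_append, List.count_append, hinv, ih1, ih2]
  | mul A B ih1 ih2 => simp only [cnt, lw, List.map_append, List.count_append, ih1, ih2]
  | dia i A ih => simp [cnt, lw, List.count_cons, h1, ih]; omega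
  | box i A ih => simp [cnt, lw, List.count_cons, h1, ih]; omega

theorem norm_gv_le (A : LTy) : (gv A).norm ≤ (lw A).length := FreeGroup.norm_mk_le

theorem reduced_of_nodup (L : List (Gen × Bool)) (h : (L.map Prod.fst).Nodup) :
    FreeGroup.IsReduced L := by
  unfold FreeGroup.IsReduced
  apply List.Pairwise.isChain
  have := List.pairwise_map.1 h
  exact this.imp fun h1 h2 => absurd h2 h1

theorem norm_gv (A : LTy) (h : ∀ g, cnt g A ≤ 1) : (gv A).norm = (lw A).length := by
  have : ((lw A).map Prod.fst).Nodup := by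
    rw [List.nodup_iff_count_le_one]
    intro g; rw [← cnt_eq]; exact h g
  unfold FreeGroup.norm gv
  rw [FreeGroup.toWord_mk, (reduced_of_nodup _ this).reduce_eq]

/-- The generator `a` does not occur in the reduced word of `x`. -/
def Lack (a : Gen) (x : FG) : Prop := ∀ l ∈ x.toWord, l.1 ≠ a

theorem lack_mk {a : Gen} {L : List (Gen × Bool)} (h : ∀ l ∈ L, l.1 ≠ a) :
    Lack a (FreeGroup.mk L) := by
  intro l hl
  rw [FreeGroup.toWord_mk] at hl
  exact h l (FreeGroup.reduce.red.sublist.subset hl)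

theorem Lack.mul {a x y} (hx : Lack a x) (hy : Lack a y) : Lack a (x * y) := by
  intro l hl
  have := (FreeGroup.toWord_mul_sublist x y).subset hl
  rcases List.mem_append.1 this with h | h
  · exact hx l h
  · exact hy l h

theorem Lack.inv {a x} (hx : Lack a x) : Lack a x⁻¹ := by
  intro l hl
  rw [FreeGroup.toWord_inv, FreeGroup.invRev] at hl
  obtain ⟨b, hb, rfl⟩ := List.mem_map.1 (List.mem_reverse.1 hl)
  exact hx b hb

theorem Lack.one {a} : Lack a 1 := by intro l hl; simp at hl

theorem Lack.of {a b : Gen} (h : b ≠ a) : Lack a (FreeGroup.of b) := by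
  intro l hl; simp at hl; subst hl; exact h

theorem lack_gv {a A} (h : cnt a A = 0) : Lack a (gv A) := by
  apply lack_mk
  rw [cnt_eq, List.count_eq_zero] at h
  intro l hl hla
  exact h (List.mem_map.2 ⟨l, hl, hla⟩)

theorem lack_pv {a X} (h : cntL a X = 0) : Lack a (pv X) := by
  induction X with
  | nil => exact Lack.one
  | cons t X ih =>
    simp only [cntL, Nat.add_eq_zero_iff] at h
    refine Lack.mul ?_ (ih h.2)
    have h1 := h.1
    cases t with
    | ty A => exact lack_gv h1
    | op i => exact Lack.of (by intro h; simp [cntT, one, h] at h1)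
    | cl i => exact Lack.of (by intro h; simp [cntT, one, h] at h1)

theorem norm_mid (a : Gen) (e : Bool) {x y : FG} (hx : Lack a x) (hy : Lack a y) :
    (x * FreeGroup.mk [(a, e)] * y).norm = x.norm + 1 + y.norm := by
  have hr : FreeGroup.IsReduced (x.toWord ++ (a, e) :: y.toWord) := by
    unfold FreeGroup.IsReduced
    refine List.isChain_append.2 ⟨FreeGroup.isReduced_toWord, ?_, ?_⟩
    · refine List.isChain_cons.2 ⟨?_, FreeGroup.isReduced_toWord⟩
      intro l hl h
      exact absurd h.symm (hy l (List.mem_of_mem_head? hl))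
    · intro l hl l' hl' h
      simp at hl'; subst hl'
      exact absurd h (hx l (List.mem_of_mem_getLast? hl))
  have : x * FreeGroup.mk [(a, e)] * y = FreeGroup.mk (x.toWord ++ (a, e) :: y.toWord) := by
    conv_lhs => rw [← FreeGroup.mk_toWord (x := x), ← FreeGroup.mk_toWord (x := y)]
    simp
  rw [this, FreeGroup.norm, FreeGroup.toWord_mk, hr.reduce_eq]
  simp [FreeGroup.norm]; omega

theorem norm_two (a b : Gen) (e d : Bool) {x y z : FG} (hab : b ≠ a) (hx : Lack a x)
    (hy : Lack a y) (hz : Lack a z) (hy' : Lack b y) (hz' : Lack b z) :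
    y.norm + 2 ≤ (x * FreeGroup.mk [(a, e)] * (y * FreeGroup.mk [(b, d)] * z)).norm := by
  have hb : Lack a (FreeGroup.mk [(b, d)]) := lack_mk (by simpa using hab)
  rw [norm_mid a e hx ((hy.mul hb).mul hz), norm_mid b d hy' hz']
  omega

/-- Exponent sum of a generator. -/
def ex (a : Gen) : FG →* Multiplicative ℤ :=
  FreeGroup.lift (fun g => Multiplicative.ofAdd (one a g : ℤ))

theorem ex_gv {a A} (h : cnt a A = 0) : ex a (gv A) = 1 := by
  induction A with
  | prim p =>
    have : gv (.prim p) = FreeGroup.of (.p p) := rfl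
    rw [this]; simp [ex]; simpa [cnt] using h
  | dia i A ih =>
    simp only [cnt, Nat.add_eq_zero_iff] at h
    simp [ih h.1.2]; simp [ex, h.1.1, h.2]
  | box i A ih =>
    simp only [cnt, Nat.add_eq_zero_iff] at h
    simp [ih h.1.2]; simp [ex, h.1.1, h.2]
  | _ => simp_all [cnt]

theorem ex_pv {a X} (h : ∀ A, Tok.ty A ∈ X → cnt a A = 0) :
    ex a (pv X) = Multiplicative.ofAdd (cntL a X : ℤ) := by
  induction X with
  | nil => simp [pv, cntL]
  | cons t X ih =>
    simp only [pv, cntL, map_mul, ih (fun A hA => h A (by simp [hA]))]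
    push_cast
    rw [ofAdd_add]
    congr 1
    cases t with
    | ty A => simp [tv, ex_gv (h A (by simp)), cntT, h A (by simp)]
    | op i => simp [tv, ex, cntT]
    | cl i => simp [tv, ex, cntT]

theorem cancel_words (n : ℕ) : ∀ U V : List (Gen × Bool), U.length ≤ n →
    FreeGroup.IsReduced U → FreeGroup.IsReduced V →
    ∃ U' Z V', U = U' ++ Z ∧ V = FreeGroup.invRev Z ++ V' ∧ FreeGroup.IsReduced (U' ++ V') := by
  induction n with
  | zero =>
    intro U V hl hU hV
    obtain rfl : U = [] := by simpa using hl
    exact ⟨[], [], V, by simp, by simp, by simpa using hV⟩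
  | succ n ih =>
    intro U V hl hU hV
    by_cases hr : FreeGroup.IsReduced (U ++ V)
    · exact ⟨U, [], V, by simp, by simp, hr⟩
    rcases List.eq_nil_or_concat U with rfl | ⟨U0, u, rfl⟩
    · exact absurd hV (by simpa using hr)
    rw [List.concat_eq_append] at *
    cases V with
    | nil => exact absurd hU (by simpa using hr)
    | cons v V0 =>
      have huv : ¬ (u.1 = v.1 → u.2 = v.2) := by
        intro h
        apply hr
        refine List.isChain_append.2 ⟨hU, hV, ?_⟩
        intro x hx y hy
        simp at hx hy; subst hx; subst hy; exact h
      obtain ⟨U', Z, V', h1, h2, h3⟩ := ih U0 V0 (by simp at hl; exact hl)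
        (List.isChain_append.1 hU).1 (List.IsChain.tail hV)
      refine ⟨U', Z ++ [u], V', by simp [h1], ?_, h3⟩
      obtain ⟨u1, u2⟩ := u
      obtain ⟨v1, v2⟩ := v
      simp only [Classical.not_imp] at huv
      obtain ⟨rfl, hb⟩ := huv
      have : v2 = !u2 := by cases u2 <;> cases v2 <;> simp_all
      subst this
      simp [FreeGroup.invRev, h2]

theorem mk_cancel (U Z V : List (Gen × Bool)) :
    FreeGroup.mk ((U ++ Z) ++ (FreeGroup.invRev Z ++ V)) = FreeGroup.mk (U ++ V) := by
  simp only [← FreeGroup.mul_mk, ← FreeGroup.inv_mk]; group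

theorem cancel (x y : FG) : ∃ U' Z V', x.toWord = U' ++ Z ∧ y.toWord = FreeGroup.invRev Z ++ V' ∧
    (x * y).toWord = U' ++ V' := by
  obtain ⟨U', Z, V', h1, h2, h3⟩ := cancel_words _ x.toWord y.toWord le_rfl
    FreeGroup.isReduced_toWord FreeGroup.isReduced_toWord
  refine ⟨U', Z, V', h1, h2, ?_⟩
  conv_lhs => rw [← FreeGroup.mk_toWord (x := x), ← FreeGroup.mk_toWord (x := y)]
  rw [h1, h2, FreeGroup.mul_mk, mk_cancel, FreeGroup.toWord_mk, h3.reduce_eq]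

def Good (w u : FG) : Prop := ∃ P T Q, w.toWord = P ++ T ∧ u.toWord = Q ++ T ∧
  u.norm < 2 * T.length

theorem good_step {w u v : FG} (h : Good w u) (hm : max u.norm v.norm < (u * v).norm) :
    Good (w * v) v := by
  obtain ⟨P, T, Q, h1, h2, h3⟩ := h
  obtain ⟨U', Z, V', k1, k2, k3⟩ := cancel u v
  have n1 : u.norm = U'.length + Z.length := by simp [FreeGroup.norm, k1]
  have n2 : v.norm = Z.length + V'.length := by simp [FreeGroup.norm, k2]
  have n3 : (u * v).norm = U'.length + V'.length := by simp [FreeGroup.norm, k3]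
  have n4 : u.norm = Q.length + T.length := by simp [FreeGroup.norm, h2]
  have hz : Z.length < T.length := by omega
  rw [h2] at k1
  have hT : ∃ T1, T = T1 ++ Z ∧ U' = Q ++ T1 := by
    rcases List.append_eq_append_iff.1 k1 with ⟨a, a1, a2⟩ | ⟨a, a1, a2⟩
    · exact ⟨a, a2, a1⟩
    · have := congrArg List.length a2
      simp at this; omega
  obtain ⟨T1, rfl, rfl⟩ := hT
  have hT1 : T1 ≠ [] := by rintro rfl; simp at hz
  have r1 : FreeGroup.IsReduced (P ++ T1) := by
    have : FreeGroup.IsReduced w.toWord := FreeGroup.isReduced_toWord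
    rw [h1, ← List.append_assoc] at this
    exact (List.isChain_append.1 this).1
  have r2 : FreeGroup.IsReduced (T1 ++ V') := by
    have : FreeGroup.IsReduced (u * v).toWord := FreeGroup.isReduced_toWord
    rw [k3, List.append_assoc] at this
    exact (List.isChain_append.1 this).2.1
  have r3 : FreeGroup.IsReduced ((P ++ T1) ++ V') := by
    unfold FreeGroup.IsReduced at *
    rw [List.append_assoc]
    have r1' := List.isChain_append.1 r1
    refine List.isChain_append.2 ⟨r1'.1, r2, ?_⟩
    intro x hx y hy
    apply r1'.2.2 x hx y
    cases T1 with
    | nil => simp at hT1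
    | cons t T1 => simpa using hy
  refine ⟨P ++ T1, V', FreeGroup.invRev Z, ?_, k2, by omega⟩
  conv_lhs => rw [← FreeGroup.mk_toWord (x := w), ← FreeGroup.mk_toWord (x := v)]
  rw [h1, k2, ← List.append_assoc P, FreeGroup.mul_mk, mk_cancel, FreeGroup.toWord_mk,
    r3.reduce_eq]

theorem good_ne {w u : FG} (h : Good w u) : w ≠ 1 := by
  rintro rfl
  obtain ⟨P, T, Q, h1, h2, h3⟩ := h
  simp at h1
  simp [h1.2] at h3

theorem good_list (l : List FG) : ∀ w u, Good w u →
    (u :: l).IsChain (fun x y => max x.norm y.norm < (x * y).norm) → w * l.prod ≠ 1 := by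
  induction l with
  | nil => intro w u h _; simpa using good_ne h
  | cons v l ih =>
    intro w u h hc
    rw [List.isChain_cons_cons] at hc
    have := ih (w * v) v (good_step h hc.1) hc.2
    simpa [mul_assoc] using this

/-- The lemma of Pentus. -/
theorem pentus (u v : FG) (l : List FG) (h : (u :: v :: l).prod = 1) :
    ∃ l1 x y l2, u :: v :: l = l1 ++ x :: y :: l2 ∧ (x * y).norm ≤ max x.norm y.norm := by
  by_contra hc
  push Not at hc
  have hch : (u :: v :: l).IsChain (fun x y => max x.norm y.norm < (x * y).norm) := by
    rw [List.isChain_iff_forall_rel_of_append_cons_cons]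
    intro x y l1 l2 he
    exact hc l1 x y l2 he
  have hu : 0 < u.norm := by
    have := (List.isChain_cons_cons.1 hch).1
    have h2 := FreeGroup.norm_mul_le u v
    omega
  have hg : Good u u := ⟨[], u.toWord, [], by simp, by simp, by
    have : u.toWord.length = u.norm := rfl
    omega⟩
  exact good_list (v :: l) u u hg hch (by simpa using h)

/-! ## Trees versus token lists -/

@[simp] theorem flat_append (G D : List PTree) : flat (G ++ D) = flat G ++ flat D := by
  induction G with
  | nil => simp [flat]
  | cons t G ih => simp [flat, ih]

def blocks : List (List PTree) → List (Tok PTy)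
  | [] => []
  | G :: Gs => .cl 0 :: (flat G ++ blocks Gs)

theorem surj_aux {α : Type} (φ : α → PTy) (X : List (Tok α)) : ∀ s, chk s X = some [] →
    ∃ (G0 : List PTree) (Gs : List (List PTree)), Gs.length = s.length ∧
      X.map (tokm φ (fun _ => 0)) = flat G0 ++ blocks Gs := by
  induction X with
  | nil =>
    intro s h
    simp [chk] at h; subst h
    exact ⟨[], [], rfl, by simp [flat, blocks]⟩
  | cons a X ih =>
    intro s h
    cases a with
    | ty a =>
      obtain ⟨G0, Gs, h1, h2⟩ := ih s h
      exact ⟨.leaf (φ a) :: G0, Gs, h1, by simp [flat, flatT, tokm, h2]⟩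
    | op i =>
      obtain ⟨G0, Gs, h1, h2⟩ := ih (i :: s) h
      cases Gs with
      | nil => simp at h1
      | cons G Gs =>
        exact ⟨.node G0 :: G, Gs, by simpa using h1, by simp [flat, flatT, tokm, h2, blocks]⟩
    | cl i =>
      cases s with
      | nil => simp [chk] at h
      | cons j s =>
        simp only [chk] at h
        split_ifs at h
        obtain ⟨G0, Gs, h1, h2⟩ := ih s h
        exact ⟨[], G0 :: Gs, by simpa using h1, by simp [flat, tokm, h2, blocks]⟩

theorem surj {α : Type} (φ : α → PTy) {X : List (Tok α)} (h : WB X) :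
    ∃ G : List PTree, flat G = X.map (tokm φ (fun _ => 0)) := by
  obtain ⟨G0, Gs, h1, h2⟩ := surj_aux φ X [] h
  obtain rfl : Gs = [] := by simpa using h1
  exact ⟨G0, by simpa [blocks] using h2.symm⟩

def Ends (X : List (Tok PTy)) : Prop := X = [] ∨ ∃ Y, X = .cl 0 :: Y

theorem inj_aux : ∀ (G G' : List PTree) (X X' : List (Tok PTy)), Ends X → Ends X' →
    flat G ++ X = flat G' ++ X' → G = G' ∧ X = X'
  | [], [], X, X', _, _, h => ⟨rfl, by simpa [flat] using h⟩
  | [], .leaf A :: ts, X, X', hX, _, h => by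
    rcases hX with rfl | ⟨Y, rfl⟩ <;> simp [flat, flatT] at h
  | [], .node us :: ts, X, X', hX, _, h => by
    rcases hX with rfl | ⟨Y, rfl⟩ <;> simp [flat, flatT] at h
  | .leaf A :: ts, [], X, X', _, hX, h => by
    rcases hX with rfl | ⟨Y, rfl⟩ <;> simp [flat, flatT] at h
  | .node us :: ts, [], X, X', _, hX, h => by
    rcases hX with rfl | ⟨Y, rfl⟩ <;> simp [flat, flatT] at h
  | .leaf A :: ts, .leaf A' :: ts', X, X', hX, hX', h => by
    simp [flat, flatT] at h
    obtain ⟨rfl, h⟩ := h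
    obtain ⟨rfl, rfl⟩ := inj_aux ts ts' X X' hX hX' h
    exact ⟨rfl, rfl⟩
  | .leaf A :: ts, .node us :: ts', X, X', hX, hX', h => by
    simp [flat, flatT] at h
  | .node us :: ts, .leaf A' :: ts', X, X', hX, hX', h => by
    simp [flat, flatT] at h
  | .node us :: ts, .node us' :: ts', X, X', hX, hX', h => by
    simp [flat, flatT] at h
    obtain ⟨rfl, h⟩ := inj_aux us us' _ _ (.inr ⟨_, rfl⟩) (.inr ⟨_, rfl⟩) h
    simp at h
    obtain ⟨rfl, rfl⟩ := inj_aux ts ts' X X' hX hX' h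
    exact ⟨rfl, rfl⟩

theorem inj {G G' : List PTree} (h : flat G = flat G') : G = G' :=
  (inj_aux G G' [] [] (.inl rfl) (.inl rfl) (by simpa using h)).1

def PCtx.cns (t : PTree) : PCtx → PCtx
  | .hole pre post => .hole (t :: pre) post
  | .brk c pre post => .brk c (t :: pre) post

theorem plug_cns (t : PTree) (D : PCtx) (Z : PHedge) : (D.cns t).plug Z = t :: D.plug Z := by
  cases D <;> simp [PCtx.cns, PCtx.plug]

theorem split_ne {α : Type} {a b c d : List α} {x y : α} (hxy : x ≠ y)
    (h : a ++ (x :: b) = c ++ (y :: d)) :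
    (∃ e, a = c ++ (y :: e) ∧ d = e ++ (x :: b)) ∨ (∃ e, c = a ++ (x :: e) ∧ b = e ++ (y :: d)) := by
  rcases List.append_eq_append_iff.1 h with ⟨e, h1, h2⟩ | ⟨e, h1, h2⟩
  · cases e with
    | nil => simp at h2; exact absurd h2.1 hxy
    | cons z e => simp at h2; obtain ⟨rfl, h2⟩ := h2; exact .inr ⟨e, h1, h2⟩
  · cases e with
    | nil => simp at h2; exact absurd h2.1.symm hxy
    | cons z e => simp at h2; obtain ⟨rfl, h2⟩ := h2; exact .inl ⟨e, h1, h2⟩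

theorem hole_lemma : ∀ (G : List PTree) (L R : List (Tok PTy)) (A : PTy),
    flat G = L ++ (.ty A :: R) →
    ∃ D : PCtx, G = D.plug [.leaf A] ∧ ∀ Z, flat (D.plug Z) = L ++ (flat Z ++ R)
  | [], L, R, A, h => by simp [flat] at h
  | .leaf A' :: ts, L, R, A, h => by
    simp only [flat, flatT, List.cons_append, List.nil_append] at h
    cases L with
    | nil =>
      simp at h
      obtain ⟨rfl, rfl⟩ := h
      exact ⟨.hole [] ts, by simp [PCtx.plug], fun Z => by simp [PCtx.plug]⟩
    | cons t L =>
      simp at h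
      obtain ⟨rfl, h⟩ := h
      obtain ⟨D, h1, h2⟩ := hole_lemma ts L R A h
      exact ⟨D.cns (.leaf A'), by rw [plug_cns, ← h1], fun Z => by
        simp [plug_cns, flat, flatT, h2]⟩
  | .node us :: ts, L, R, A, h => by
    simp only [flat, flatT, List.cons_append, List.append_assoc, List.nil_append] at h
    cases L with
    | nil => simp at h
    | cons t L =>
      simp only [List.cons_append, List.cons.injEq] at h
      obtain ⟨rfl, h⟩ := h
      rcases split_ne (by simp) h with ⟨e, h1, rfl⟩ | ⟨e, rfl, h2⟩
      · obtain ⟨D, h3, h4⟩ := hole_lemma us L e A h1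
        exact ⟨.brk D [] ts, by simp [PCtx.plug, ← h3], fun Z => by
          simp [PCtx.plug, flat, flatT, h4]⟩
      · obtain ⟨D, h3, h4⟩ := hole_lemma ts e R A h2
        exact ⟨D.cns (.node us), by rw [plug_cns, ← h3], fun Z => by
          simp [plug_cns, flat, flatT, h4]⟩

/-- Erasure of labels. -/
def pty (f : ℕ → ℕ) : LTy → PTy
  | .prim p => .prim (f p)
  | .ldiv A B => .ldiv (pty f A) (pty f B)
  | .rdiv B A => .rdiv (pty f B) (pty f A)
  | .mul A B => .mul (pty f A) (pty f B)
  | .dia _ A => .dia (pty f A)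
  | .box _ A => .box (pty f A)

abbrev tp (f : ℕ → ℕ) : Tok LTy → Tok PTy := tokm (pty f) (fun _ => 0)

theorem len_pty (f : ℕ → ℕ) (A : LTy) : lenP (pty f A) = (lw A).length := by
  induction A <;> simp_all [pty, lenP, lw]

theorem pty_over {f : ℕ → ℕ} {B : Finset ℕ} {A : LTy} :
    (pty f A).over B ↔ ∀ p, cnt (.p p) A ≠ 0 → f p ∈ B := by
  induction A with
  | prim q => simp [pty, PTy.over, cnt, one]
  | dia i A ih => simp [pty, PTy.over, cnt, one, ih]
  | box i A ih => simp [pty, PTy.over, cnt, one, ih]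
  | _ =>
    simp only [pty, PTy.over, cnt, *]
    constructor
    · rintro ⟨h1, h2⟩ p hp
      by_cases h : cnt (.p p) ‹_› = 0
      · first
          | exact h2 p (by omega)
          | exact h1 p (by omega)
      · first
          | exact h1 p h
          | exact h2 p h
    · intro h
      exact ⟨fun p hp => h p (by omega), fun p hp => h p (by omega)⟩

theorem FP.toProv (f : ℕ → ℕ) {X C} (h : FP X C) :
    ∀ G : List PTree, flat G = X.map (tp f) → PProv G (pty f C) := by
  induction h with
  | id p =>
    intro G hG
    obtain rfl : G = [.leaf (.prim (f p))] := inj (by simpa [flat, flatT, tokm, pty] using hG)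
    exact PProv.id _
  | ldivL G L R A B C h1 h2 ih1 ih2 =>
    intro H hH
    obtain ⟨G0, hG0⟩ := surj (pty f) h1.wbal
    obtain ⟨H0, hH0⟩ := surj (pty f) h2.wbal
    obtain ⟨D, rfl, hD⟩ := hole_lemma H0 (L.map (tp f)) (R.map (tp f)) (pty f B)
      (by simpa [tokm] using hH0)
    obtain rfl : H = D.plug (G0 ++ [.leaf (.ldiv (pty f A) (pty f B))]) := inj (by
      rw [hH, hD]; simp [hG0, flat, flatT, tokm, pty])
    exact PProv.ldivL _ _ _ _ _ (ih1 _ hG0) (ih2 _ hH0)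
  | ldivR X A B hx _ ih =>
    intro G hG
    refine PProv.ldivR _ _ _ ?_ (ih _ (by simp [flat, flatT, tokm, hG]))
    rintro rfl
    simp [flat] at hG; exact hx hG
  | rdivL G L R A B C h1 h2 ih1 ih2 =>
    intro H hH
    obtain ⟨G0, hG0⟩ := surj (pty f) h1.wbal
    obtain ⟨H0, hH0⟩ := surj (pty f) h2.wbal
    obtain ⟨D, rfl, hD⟩ := hole_lemma H0 (L.map (tp f)) (R.map (tp f)) (pty f B)
      (by simpa [tokm] using hH0)
    obtain rfl : H = D.plug (.leaf (.rdiv (pty f B) (pty f A)) :: G0) := inj (by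
      rw [hH, hD]; simp [hG0, flat, flatT, tokm, pty])
    exact PProv.rdivL _ _ _ _ _ (ih1 _ hG0) (ih2 _ hH0)
  | rdivR X A B hx _ ih =>
    intro G hG
    refine PProv.rdivR _ _ _ ?_ (ih _ (by simp [flat, flatT, tokm, hG]))
    rintro rfl
    simp [flat] at hG; exact hx hG
  | mulL L R A B C _ ih =>
    intro G hG
    obtain ⟨D, rfl, hD⟩ := hole_lemma G (L.map (tp f)) (R.map (tp f)) (pty f (.mul A B))
      (by simpa [tokm] using hG)
    exact PProv.mulL _ _ _ _ (ih _ (by rw [hD]; simp [flat, flatT, tokm]))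
  | mulR G D A B h1 h2 ih1 ih2 =>
    intro H hH
    obtain ⟨G0, hG0⟩ := surj (pty f) h1.wbal
    obtain ⟨H0, hH0⟩ := surj (pty f) h2.wbal
    obtain rfl : H = G0 ++ H0 := inj (by rw [hH]; simp [hG0, hH0])
    exact PProv.mulR _ _ _ _ (ih1 _ hG0) (ih2 _ hH0)
  | diaL i L R A C _ ih =>
    intro G hG
    obtain ⟨D, rfl, hD⟩ := hole_lemma G (L.map (tp f)) (R.map (tp f)) (pty f (.dia i A))
      (by simpa [tokm] using hG)
    exact PProv.diaL _ _ _ (ih _ (by rw [hD]; simp [flat, flatT, tokm]))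
  | diaR i G A h1 ih =>
    intro H hH
    obtain ⟨G0, hG0⟩ := surj (pty f) h1.wbal
    obtain rfl : H = [.node G0] := inj (by rw [hH]; simp [hG0, flat, flatT, tokm])
    exact PProv.diaR _ _ (ih _ hG0)
  | boxL i L R A C h1 ih =>
    intro H hH
    obtain ⟨H0, hH0⟩ := surj (pty f) h1.wbal
    obtain ⟨D, rfl, hD⟩ := hole_lemma H0 (L.map (tp f)) (R.map (tp f)) (pty f A)
      (by simpa [tokm] using hH0)
    obtain rfl : H = D.plug [.node [.leaf (.box (pty f A))]] := inj (by
      rw [hH, hD]; simp [flat, flatT, tokm, pty])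
    exact PProv.boxL _ _ _ (ih _ hH0)
  | boxR i G A hG hp ih =>
    intro H hH
    exact PProv.boxR _ _ (ih _ (by simp [flat, flatT, tokm, hH]))

/-! ## The main argument -/

theorem innermost (X : List (Tok LTy)) :
    (∃ Ts : List LTy, X = Ts.map .ty) ∨
    (∃ (Ts : List LTy) (j : ℕ) (R : List (Tok LTy)), X = Ts.map .ty ++ .cl j :: R) ∨
    (∃ (L : List (Tok LTy)) (i : ℕ) (Ts : List LTy) (j : ℕ) (R : List (Tok LTy)),
      X = L ++ .op i :: (Ts.map .ty ++ .cl j :: R)) ∨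
    (∃ (L : List (Tok LTy)) (i : ℕ) (Ts : List LTy), X = L ++ .op i :: Ts.map .ty) := by
  induction X with
  | nil => exact .inl ⟨[], rfl⟩
  | cons t X ih =>
    cases t with
    | ty A =>
      rcases ih with ⟨Ts, rfl⟩ | ⟨Ts, j, R, rfl⟩ | ⟨L, i, Ts, j, R, rfl⟩ | ⟨L, i, Ts, rfl⟩
      · exact .inl ⟨A :: Ts, rfl⟩
      · exact .inr (.inl ⟨A :: Ts, j, R, rfl⟩)
      · exact .inr (.inr (.inl ⟨.ty A :: L, i, Ts, j, R, rfl⟩))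
      · exact .inr (.inr (.inr ⟨.ty A :: L, i, Ts, rfl⟩))
    | op k =>
      rcases ih with ⟨Ts, rfl⟩ | ⟨Ts, j, R, rfl⟩ | ⟨L, i, Ts, j, R, rfl⟩ | ⟨L, i, Ts, rfl⟩
      · exact .inr (.inr (.inr ⟨[], k, Ts, rfl⟩))
      · exact .inr (.inr (.inl ⟨[], k, Ts, j, R, rfl⟩))
      · exact .inr (.inr (.inl ⟨.op k :: L, i, Ts, j, R, rfl⟩))
      · exact .inr (.inr (.inr ⟨.op k :: L, i, Ts, rfl⟩))
    | cl k => exact .inr (.inl ⟨[], k, X, rfl⟩)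

theorem wb_types (Ts : List LTy) : WB (Ts.map (Tok.ty : LTy → Tok LTy)) := by
  induction Ts with
  | nil => exact WB.nil
  | cons A Ts ih => exact ih

theorem innermost_wb {X : List (Tok LTy)} (h : WB X) :
    (∃ Ts : List LTy, X = Ts.map .ty) ∨
    (∃ (L : List (Tok LTy)) (i : ℕ) (Ts : List LTy) (R : List (Tok LTy)),
      X = L ++ .op i :: (Ts.map .ty ++ .cl i :: R)) := by
  rcases innermost X with h1 | ⟨Ts, j, R, rfl⟩ | ⟨L, i, Ts, j, R, rfl⟩ | ⟨L, i, Ts, rfl⟩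
  · exact .inl h1
  · unfold WB at h
    rw [chk_append, (wb_types Ts).chk] at h
    simp [chk] at h
  · unfold WB at h
    rw [chk_append] at h
    obtain ⟨s, _, hs⟩ := Option.bind_eq_some_iff.1 h
    rw [chk, chk_append, (wb_types Ts).chk] at hs
    simp only [Option.bind_some, chk] at hs
    split_ifs at hs with hij
    subst hij
    exact .inr ⟨L, j, Ts, R, rfl⟩
  · unfold WB at h
    rw [chk_append] at h
    obtain ⟨s, _, hs⟩ := Option.bind_eq_some_iff.1 h
    rw [chk, (wb_types Ts).chk] at hs
    simp at hs

theorem cnt_oc (i : ℕ) (A : LTy) : cnt (.c i) A = cnt (.o i) A := by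
  induction A with
  | prim p => simp [cnt, one]
  | dia j A ih => simp [cnt, one, ih]; omega
  | box j A ih => simp [cnt, one, ih]; omega
  | _ => simp [cnt, *]

theorem one_oo (i : ℕ) : one (.o i) (.o i) = 1 := by simp [one]
theorem one_cc (i : ℕ) : one (.c i) (.c i) = 1 := by simp [one]
theorem one_oc (i : ℕ) : one (.o i) (.c i) = 0 := by simp [one]
theorem one_co (i : ℕ) : one (.c i) (.o i) = 0 := by simp [one]

def LB (m : ℕ) (X : List (Tok LTy)) (C : LTy) : Prop :=
  (∀ A, Tok.ty A ∈ X → (lw A).length ≤ m) ∧ (lw C).length ≤ m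

theorem outer_bound {L Th R : List (Tok LTy)} {i m : ℕ} {C A : LTy}
    (h : FP (L ++ .op i :: (Th ++ .cl i :: R)) C)
    (ht : Thin (L ++ .op i :: (Th ++ .cl i :: R)) C)
    (hb : LB m (L ++ .op i :: (Th ++ .cl i :: R)) C)
    (hA : Tok.ty A ∈ L ∨ Tok.ty A ∈ R ∨ A = C) (hc : cnt (.o i) A ≠ 0) :
    (pv Th).norm + 2 ≤ m := by
  have hv := h.val
  have tto := ht (.o i)
  have tc := ht (.c i)
  have hoc := cnt_oc i A
  simp only [pv_append, pv, tv] at hv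
  rw [← FreeGroup.norm_inv_eq]
  rcases hA with hA | hA | rfl
  · refine le_trans ?_ (hb.1 A (by simp [hA]))
    obtain ⟨L1, L2, rfl⟩ := List.append_of_mem hA
    simp only [cntL_append, cntL, cntT, one_oo, one_cc, one_oc, one_co] at tto tc
    refine le_trans ?_ (norm_gv_le A)
    simp only [pv_append, pv, tv] at hv
    have e : gv A = ((pv L1)⁻¹ * gv C * (pv R)⁻¹) * FreeGroup.mk [(.c i, false)] *
        ((pv Th)⁻¹ * FreeGroup.mk [(.o i, false)] * (pv L2)⁻¹) := by
      rw [mk_false, mk_false, ← hv]; group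
    rw [e]
    refine norm_two (.c i) (.o i) false false (by simp) ?_ ?_ ?_ ?_ ?_
    · exact ((lack_pv (by omega)).inv.mul (lack_gv (by omega))).mul (lack_pv (by omega)).inv
    all_goals exact (lack_pv (by omega)).inv
  · refine le_trans ?_ (hb.1 A (by simp [hA]))
    obtain ⟨R1, R2, rfl⟩ := List.append_of_mem hA
    simp only [cntL_append, cntL, cntT, one_oo, one_cc, one_oc, one_co] at tto tc
    refine le_trans ?_ (norm_gv_le A)
    simp only [pv_append, pv, tv] at hv
    have e : gv A = (pv R1)⁻¹ * FreeGroup.mk [(.c i, false)] *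
        ((pv Th)⁻¹ * FreeGroup.mk [(.o i, false)] * ((pv L)⁻¹ * gv C * (pv R2)⁻¹)) := by
      rw [mk_false, mk_false, ← hv]; group
    rw [e]
    refine norm_two (.c i) (.o i) false false (by simp) ?_ ?_ ?_ ?_ ?_
    · exact (lack_pv (by omega)).inv
    · exact (lack_pv (by omega)).inv
    · exact ((lack_pv (by omega)).inv.mul (lack_gv (by omega))).mul (lack_pv (by omega)).inv
    · exact (lack_pv (by omega)).inv
    · exact ((lack_pv (by omega)).inv.mul (lack_gv (by omega))).mul (lack_pv (by omega)).inv
  · refine le_trans ?_ hb.2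
    simp only [cntL_append, cntL, cntT, one_oo, one_cc, one_oc, one_co] at tto tc
    refine le_trans ?_ (norm_gv_le A)
    rw [FreeGroup.norm_inv_eq]
    have e : gv A = pv L * FreeGroup.mk [(.o i, true)] *
        (pv Th * FreeGroup.mk [(.c i, true)] * pv R) := by
      rw [mk_true, mk_true, ← hv]; group
    rw [e]
    refine norm_two (.o i) (.c i) true true (by simp) ?_ ?_ ?_ ?_ ?_
    all_goals exact lack_pv (by omega)

theorem inner_bound {L Th R : List (Tok LTy)} {i m : ℕ} {C A E : LTy}
    (ht : Thin (L ++ .op i :: (Th ++ .cl i :: R)) C)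
    (hb : LB m (L ++ .op i :: (Th ++ .cl i :: R)) C)
    (hE : pv (.op i :: (Th ++ [.cl i])) = gv E)
    (hE2 : ∀ g, cnt g E ≤ cntL g L + cntL g R + cnt g C)
    (hA : Tok.ty A ∈ Th) (hc : cnt (.o i) A ≠ 0) :
    (gv E).norm + 2 ≤ m := by
  have tto := ht (.o i)
  have tc := ht (.c i)
  have hoc := cnt_oc i A
  have eo := hE2 (.o i)
  have ec := hE2 (.c i)
  refine le_trans ?_ (hb.1 A (by simp [hA]))
  obtain ⟨L1, L2, rfl⟩ := List.append_of_mem hA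
  simp only [cntL_append, cntL, cntT, one_oo, one_cc, one_oc, one_co] at tto tc
  refine le_trans ?_ (norm_gv_le A)
  simp only [pv_append, pv, tv] at hE
  have e : gv A = (pv L1)⁻¹ * FreeGroup.mk [(.o i, false)] *
      (gv E * FreeGroup.mk [(.c i, false)] * (pv L2)⁻¹) := by
    rw [mk_false, mk_false, ← hE]; group
  rw [e]
  refine norm_two (.o i) (.c i) false false (by simp) ?_ ?_ ?_ ?_ ?_
  · exact (lack_pv (by omega)).inv
  · exact lack_gv (by omega)
  · exact (lack_pv (by omega)).inv
  · exact lack_gv (by omega)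
  · exact (lack_pv (by omega)).inv

theorem exists_partner {L Th R : List (Tok LTy)} {i : ℕ} {C : LTy}
    (h : FP (L ++ .op i :: (Th ++ .cl i :: R)) C) :
    ∃ A, cnt (.o i) A ≠ 0 ∧ (Tok.ty A ∈ Th ∨ (Tok.ty A ∈ L ∨ Tok.ty A ∈ R ∨ A = C)) := by
  by_contra hc
  push Not at hc
  have h0 : ∀ A, Tok.ty A ∈ L ++ .op i :: (Th ++ .cl i :: R) → cnt (.o i) A = 0 := by
    intro A hA
    by_contra hn
    have := hc A hn
    simp at hA
    tauto
  have hC : cnt (.o i) C = 0 := by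
    by_contra hn
    exact (hc C hn).2.2.2 rfl
  have h1 := ex_pv h0
  rw [h.val, ex_gv hC, ← ofAdd_zero] at h1
  have h2 := Multiplicative.ofAdd.injective h1
  simp only [cntL_append, cntL, cntT, one_oo] at h2
  omega

def TB (f : ℕ → ℕ) (B : Finset ℕ) (X : List (Tok LTy)) (C : LTy) : Prop :=
  Thin X C ∧ ∀ p, cntL (.p p) X + cnt (.p p) C ≠ 0 → f p ∈ B

theorem TB.mono {f B X C X' C'} (h : TB f B X C)
    (hle : ∀ g, cntL g X' + cnt g C' ≤ cntL g X + cnt g C) : TB f B X' C' :=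
  ⟨fun g => (hle g).trans (h.1 g), fun p hp => h.2 p (by have := hle (.p p); omega)⟩

theorem interpK {f B C} {L T R : List (Tok LTy)} (h : FP (L ++ (T ++ R)) C)
    (ht : TB f B (L ++ (T ++ R)) C) (hT : T ≠ []) (hw : WB T) :
    ∃ E, FP T E ∧ FP (L ++ (.ty E :: R)) C ∧ (lw E).length = (pv T).norm ∧
      (∀ g, cnt g E ≤ cntL g T) ∧ (∀ g, cnt g E ≤ cntL g L + cntL g R + cnt g C) := by
  obtain ⟨E, h1, h2, h3⟩ := interp h L T R rfl hT hw
  refine ⟨E, h1, h2, ?_, fun g => (h3 g).1, fun g => (h3 g).2⟩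
  rw [h1.val, norm_gv]
  intro g
  have a := h3 g
  have b := ht.1 g
  simp only [cntL_append] at b
  omega

def Kd (f : ℕ → ℕ) (S : Set (PHedge × PTy)) (X : List (Tok LTy)) (C : LTy) : Prop :=
  ∀ G : List PTree, flat G = X.map (tp f) → CutDeriv S G (pty f C)

theorem Kd.cut {f S C E} {L T R : List (Tok LTy)} (hT : WB T) (hX : WB (L ++ (.ty E :: R)))
    (h1 : Kd f S T E) (h2 : Kd f S (L ++ (.ty E :: R)) C) : Kd f S (L ++ (T ++ R)) C := by
  intro H hH
  obtain ⟨G0, hG0⟩ := surj (pty f) hT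
  obtain ⟨H0, hH0⟩ := surj (pty f) hX
  obtain ⟨D, rfl, hD⟩ := hole_lemma H0 (L.map (tp f)) (R.map (tp f)) (pty f E)
    (by simpa [tokm] using hH0)
  obtain rfl : H = D.plug G0 := inj (by rw [hH, hD]; simp [hG0])
  exact CutDeriv.cut _ _ _ _ (h1 _ hG0) (h2 _ hH0)

theorem over_ty {f B X C A} (h : TB f B X C) (hA : Tok.ty A ∈ X) : (pty f A).over B := by
  rw [pty_over]
  intro p hp
  apply h.2
  obtain ⟨L, R, rfl⟩ := List.append_of_mem hA
  simp only [cntL_append, cntL, cntT]; omega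

theorem over_C {f B X C} (h : TB f B X C) : (pty f C).over B := by
  rw [pty_over]
  intro p hp
  apply h.2; omega

theorem base_S {f B m C} {Ts : List LTy} (h : FP (Ts.map .ty) C) (ht : TB f B (Ts.map .ty) C)
    (hb : LB m (Ts.map .ty) C) (hl : Ts.length ≤ 2) : Kd f (TBm B m) (Ts.map .ty) C := by
  intro G hG
  apply CutDeriv.base
  left; left
  have hp := h.toProv f G hG
  have hfl : ∀ l : List PTy, flat (l.map PTree.leaf) = l.map Tok.ty := by
    intro l
    induction l with
    | nil => simp [flat]
    | cons a l ih => simp [flat, flatT, ih]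
  obtain rfl : G = (Ts.map (pty f)).map PTree.leaf := inj (by
    rw [hG, hfl]; simp [tokm])
  refine ⟨Ts.map (pty f), pty f C, rfl, by simpa using hl, ?_, hp⟩
  intro T hT
  rcases List.mem_cons.1 hT with rfl | hT
  · exact ⟨over_C ht, by rw [len_pty]; exact hb.2⟩
  · obtain ⟨A, hA, rfl⟩ := List.mem_map.1 hT
    have : Tok.ty A ∈ Ts.map (Tok.ty : LTy → Tok LTy) := List.mem_map.2 ⟨A, hA, rfl⟩
    exact ⟨over_ty ht this, by rw [len_pty]; exact hb.1 A this⟩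

theorem base_dia {f B m i E} (ho : (pty f E).over B) (hl : (lw E).length + 2 ≤ m) :
    Kd f (TBm B m) [.op i, .ty E, .cl i] (.dia i E) := by
  intro G hG
  apply CutDeriv.base
  left; right
  obtain rfl : G = [.node [.leaf (pty f E)]] := inj (by rw [hG]; simp [flat, flatT, tokm])
  exact ⟨pty f E, ho, by rw [len_pty]; omega, rfl⟩

theorem base_box {f B m i E} (ho : (pty f E).over B) (hl : (lw E).length + 2 ≤ m) :
    Kd f (TBm B m) [.op i, .ty (.box i E), .cl i] E := by
  intro G hG
  apply CutDeriv.base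
  right
  obtain rfl : G = [.node [.leaf (.box (pty f E))]] := inj (by
    rw [hG]; simp [flat, flatT, tokm, pty])
  exact ⟨pty f E, ho, by rw [len_pty]; omega, rfl⟩

theorem pv_types (Ts : List LTy) : pv (Ts.map .ty) = (Ts.map gv).prod := by
  induction Ts with
  | nil => rfl
  | cons A Ts ih => simp [pv, tv, ih]

theorem pentus_types {Ts : List LTy} {C : LTy} (hl : ¬ Ts.length ≤ 2)
    (h : pv (Ts.map .ty) = gv C) :
    (∃ T1 A, Ts = T1 ++ [A] ∧ (gv A * (gv C)⁻¹).norm ≤ max (gv A).norm (gv C).norm) ∨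
    (∃ T1 A A' T2, Ts = T1 ++ A :: A' :: T2 ∧
      (gv A * gv A').norm ≤ max (gv A).norm (gv A').norm) := by
  obtain ⟨a, b, rest, rfl⟩ : ∃ a b rest, Ts = a :: b :: rest := by
    match Ts, hl with
    | [], hl => simp at hl
    | [a], hl => simp at hl
    | a :: b :: rest, _ => exact ⟨a, b, rest, rfl⟩
  rw [pv_types] at h
  obtain ⟨l1, x, y, l2, e, hxy⟩ := pentus (gv a) (gv b) (rest.map gv ++ [(gv C)⁻¹]) (by
    rw [← h]; simp [mul_assoc])
  have e' : (a :: b :: rest).map gv ++ [(gv C)⁻¹] = l1 ++ x :: y :: l2 := by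
    rw [← e]; simp
  rcases List.eq_nil_or_concat l2 with rfl | ⟨l2', z, rfl⟩
  · left
    have e2 : (a :: b :: rest).map gv ++ [(gv C)⁻¹] = (l1 ++ [x]) ++ [y] := by
      rw [e']; simp
    obtain ⟨e3, e4⟩ := List.append_inj' e2 rfl
    obtain ⟨T1, T2, e5, -, e6⟩ := List.map_eq_append_iff.1 e3
    obtain ⟨A, T3, rfl, rfl, e7⟩ := List.map_eq_cons_iff.1 e6
    obtain rfl : T3 = [] := by simpa using e7
    obtain rfl : (gv C)⁻¹ = y := by simpa using e4
    exact ⟨T1, A, e5, by simpa using hxy⟩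
  · right
    have e2 : (a :: b :: rest).map gv ++ [(gv C)⁻¹] = (l1 ++ x :: y :: l2') ++ [z] := by
      rw [e']; simp
    obtain ⟨e3, e4⟩ := List.append_inj' e2 rfl
    obtain ⟨T1, T2, e5, -, e6⟩ := List.map_eq_append_iff.1 e3
    obtain ⟨A, T3, rfl, rfl, e7⟩ := List.map_eq_cons_iff.1 e6
    obtain ⟨A', T4, rfl, rfl, -⟩ := List.map_eq_cons_iff.1 e7
    exact ⟨T1, A, A', T4, e5, hxy⟩

theorem main_flat {f B m} (n : ℕ) : ∀ X C, X.length ≤ n → FP X C → TB f B X C → LB m X C →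
    Kd f (TBm B m) X C := by
  induction n with
  | zero =>
    intro X C hn h
    exact absurd (by simpa using hn) h.na.1
  | succ n ih =>
    intro X C hn h ht hb
    rcases innermost_wb h.wbal with ⟨Ts, rfl⟩ | ⟨L, i, Ts, R, rfl⟩
    · by_cases hl : Ts.length ≤ 2
      · exact base_S h ht hb hl
      rcases pentus_types hl h.val with ⟨T1, A, rfl, hA⟩ | ⟨T1, A, A', T2, rfl, hA⟩
      · have hbA := hb.1 A (by simp)
        have hbC := hb.2
        simp only [List.length_append, List.length_cons, List.length_nil] at hl
        have hT1 : T1.map (Tok.ty : LTy → Tok LTy) ≠ [] := by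
          intro h0
          have : T1 = [] := by simpa using h0
          subst this; simp at hl
        have h' : FP ([] ++ (T1.map .ty ++ [.ty A])) C := by simpa using h
        have ht' : TB f B ([] ++ (T1.map .ty ++ [.ty A])) C := by simpa using ht
        obtain ⟨E, h1, h2, h3, h4, h5⟩ := interpK h' ht' hT1 (wb_types T1)
        have hEl : (lw E).length ≤ m := by
          have e : pv (T1.map .ty) = (gv A * (gv C)⁻¹)⁻¹ := by
            rw [← h.val]; simp [pv, tv]
          rw [h3, e, FreeGroup.norm_inv_eq]
          refine hA.trans (max_le ((norm_gv_le A).trans hbA) ((norm_gv_le C).trans hbC))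
        have k1 : TB f B (T1.map .ty) E := ht'.mono (by
          intro g; have := h5 g
          simp only [cntL_append, cntL, cntT] at *; omega)
        have k2 : TB f B ([] ++ [.ty E, .ty A]) C := ht'.mono (by
          intro g; have := h4 g
          simp only [cntL_append, cntL, cntT] at *; omega)
        have d1 : Kd f (TBm B m) (T1.map .ty) E := by
          refine ih _ _ ?_ h1 k1 ⟨?_, hEl⟩
          · simp at hn ⊢; omega
          · intro A' hA'; exact hb.1 A' (by rw [List.map_append]; simp only [List.mem_append]; tauto)
        have d2 : Kd f (TBm B m) ([] ++ [.ty E, .ty A]) C := by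
          refine base_S (Ts := [E, A]) h2 k2 ⟨?_, hbC⟩ (by simp)
          intro A' hA'
          simp at hA'
          rcases hA' with rfl | rfl
          · exact hEl
          · exact hbA
        have d3 := Kd.cut (wb_types T1) h2.wbal d1 d2
        simpa using d3
      · have hbA := hb.1 A (by simp)
        have hbA' := hb.1 A' (by simp)
        have h' : FP (T1.map .ty ++ ([.ty A, .ty A'] ++ T2.map .ty)) C := by simpa using h
        have ht' : TB f B (T1.map .ty ++ ([.ty A, .ty A'] ++ T2.map .ty)) C := by
          simpa using ht
        obtain ⟨E, h1, h2, h3, h4, h5⟩ := interpK h' ht' (by simp) (wb_types [A, A'])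
        have hEl : (lw E).length ≤ m := by
          have e : pv [.ty A, .ty A'] = gv A * gv A' := by simp [pv, tv]
          rw [h3, e]
          refine hA.trans (max_le ((norm_gv_le A).trans hbA) ((norm_gv_le A').trans hbA'))
        have k1 : TB f B [.ty A, .ty A'] E := ht'.mono (by
          intro g; have := h5 g
          simp only [cntL_append, cntL, cntT] at *; omega)
        have k2 : TB f B (T1.map .ty ++ (.ty E :: T2.map .ty)) C := ht'.mono (by
          intro g; have := h4 g
          simp only [cntL_append, cntL, cntT] at *; omega)
        have d1 : Kd f (TBm B m) [.ty A, .ty A'] E := by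
          refine base_S (Ts := [A, A']) h1 k1 ⟨?_, hEl⟩ (by simp)
          intro A'' hA''
          simp at hA''
          rcases hA'' with rfl | rfl
          · exact hbA
          · exact hbA'
        have d2 : Kd f (TBm B m) (T1.map .ty ++ (.ty E :: T2.map .ty)) C := by
          refine ih _ _ ?_ h2 k2 ⟨?_, hb.2⟩
          · simp at hn ⊢; omega
          · intro A'' hA''
            simp at hA''
            rcases hA'' with hA'' | rfl | hA''
            · exact hb.1 A'' (by simp [hA''])
            · exact hEl
            · exact hb.1 A'' (by simp [hA''])
        have d3 := Kd.cut (wb_types [A, A']) h2.wbal d1 d2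
        simpa using d3
    · have hTs : Ts ≠ [] := by
        rintro rfl
        have := (List.isChain_append.1 h.na.2).2.1
        simp [adjOK] at this
      have hTs' : Ts.map (Tok.ty : LTy → Tok LTy) ≠ [] := by simpa using hTs
      have hpos : 0 < Ts.length := List.length_pos_iff.2 hTs
      simp only [List.length_append, List.length_cons, List.length_map] at hn
      obtain ⟨A, hA0, hA | hA⟩ := exists_partner h
      · have h' : FP (L ++ ((.op i :: (Ts.map .ty ++ [.cl i])) ++ R)) C := by simpa using h
        have ht' : TB f B (L ++ ((.op i :: (Ts.map .ty ++ [.cl i])) ++ R)) C := by simpa using ht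
        obtain ⟨E, h1, h2, h3, h4, h5⟩ := interpK h' ht' (by simp) ((wb_types Ts).brk i)
        have hE := inner_bound ht.1 hb h1.val h5 hA hA0
        have hEl : (lw E).length + 2 ≤ m := by rw [h3, h1.val]; exact hE
        have k1 : TB f B (Ts.map .ty) (.box i E) := ht'.mono (by
          intro g; have := h5 g
          simp only [cntL_append, cntL, cntT, cnt] at *; omega)
        have k2 : TB f B (L ++ (.ty E :: R)) C := ht'.mono (by
          intro g; have := h4 g
          simp only [cntL_append, cntL, cntT, cnt] at *; omega)
        have d1 : Kd f (TBm B m) (Ts.map .ty) (.box i E) := by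
          refine ih _ _ (by simp; omega) (FP.boxR i _ _ (wb_types Ts) h1) k1 ⟨?_, ?_⟩
          · intro A' hA'; exact hb.1 A' (by simp only [List.mem_append, List.mem_cons]; tauto)
          · simp [lw]; omega
        have d2 : Kd f (TBm B m) (L ++ (.ty E :: R)) C := by
          refine ih _ _ (by simp; omega) h2 k2 ⟨?_, hb.2⟩
          intro A' hA'
          simp only [List.mem_append, List.mem_cons, Tok.ty.injEq] at hA'
          rcases hA' with hA' | rfl | hA'
          · exact hb.1 A' (by simp [hA'])
          · omega
          · exact hb.1 A' (by simp [hA'])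
        have d3 : Kd f (TBm B m) [.op i, .ty (.box i E), .cl i] E :=
          base_box (over_ty (A := E) k2 (by simp)) hEl
        have d4 := Kd.cut (L := [.op i]) (R := [.cl i]) (wb_types Ts)
          (by simp [WB, chk]) d1 d3
        have d5 := Kd.cut (by simpa using (wb_types Ts).brk i) h2.wbal d4 d2
        simpa using d5
      · have h' : FP ((L ++ [.op i]) ++ (Ts.map .ty ++ (.cl i :: R))) C := by simpa using h
        have ht' : TB f B ((L ++ [.op i]) ++ (Ts.map .ty ++ (.cl i :: R))) C := by
          simpa using ht
        obtain ⟨E, h1, h2, h3, h4, h5⟩ := interpK h' ht' hTs' (wb_types Ts)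
        have hE := outer_bound h ht.1 hb hA hA0
        have hEl : (lw E).length + 2 ≤ m := by rw [h3]; exact hE
        have k1 : TB f B (Ts.map .ty) E := ht'.mono (by
          intro g; have := h5 g
          simp only [cntL_append, cntL, cntT, cnt] at *; omega)
        have k2 : TB f B (L ++ (.ty (.dia i E) :: R)) C := ht'.mono (by
          intro g; have := h4 g
          simp only [cntL_append, cntL, cntT, cnt] at *; omega)
        have h2' : FP (L ++ (.ty (.dia i E) :: R)) C := FP.diaL _ _ _ _ _ (by simpa using h2)
        have d1 : Kd f (TBm B m) (Ts.map .ty) E := by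
          refine ih _ _ (by simp; omega) h1 k1 ⟨?_, by omega⟩
          intro A' hA'; exact hb.1 A' (by simp only [List.mem_append, List.mem_cons]; tauto)
        have d2 : Kd f (TBm B m) (L ++ (.ty (.dia i E) :: R)) C := by
          refine ih _ _ (by simp; omega) h2' k2 ⟨?_, hb.2⟩
          intro A' hA'
          simp only [List.mem_append, List.mem_cons, Tok.ty.injEq] at hA'
          rcases hA' with hA' | rfl | hA'
          · exact hb.1 A' (by simp [hA'])
          · simp [lw]; omega
          · exact hb.1 A' (by simp [hA'])
        have d3 : Kd f (TBm B m) [.op i, .ty E, .cl i] (.dia i E) :=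
          base_dia (over_C k1) hEl
        have d4 := Kd.cut (L := [.op i]) (R := [.cl i]) (wb_types Ts)
          (by simp [WB, chk]) d1 d3
        have d5 := Kd.cut (by simpa using (wb_types Ts).brk i) h2'.wbal d4 d2
        simpa using d5

/-! ## Assembling -/

theorem pty_emb (A : PTy) : pty (fun n => n) (emb A) = A := by
  induction A <;> simp_all [pty, emb]

theorem pty_ren (f g : ℕ → ℕ) (A : LTy) : pty (fun n => n) (ren f g A) = pty f A := by
  induction A <;> simp_all [pty, ren]

theorem prov_id (A : PTy) : PProv [.leaf A] A := by
  have h := (den_main A).2 _ (den_main A).1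
  have := h.toProv (fun n => n) [.leaf A] (by simp [flat, flatT, tokm, pty_emb])
  rwa [pty_emb] at this

theorem cut_sound {B m G C} (h : CutDeriv (TBm B m) G C) : PProv G C := by
  induction h with
  | base G A h =>
    rcases h with (⟨L, A', e, -, -, hp⟩ | ⟨A', -, -, e⟩) | ⟨A', -, -, e⟩
    · cases e; exact hp
    · cases e; exact PProv.diaR _ _ (prov_id _)
    · cases e; exact PProv.boxL (.hole [] []) A A (prov_id A)
  | cut G D A B _ _ ih1 ih2 => exact PProv.cut _ _ _ _ ih1 ih2

mutual
theorem flatT_erase : ∀ t : PTree,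
    ((flatT t).map (tokm emb (fun i => i))).map (tp (fun n => n)) = flatT t
  | .leaf A => by simp [flatT, tokm, pty_emb]
  | .node ts => by
    have := flat_erase ts
    simp only [flatT, List.map_cons, List.map_append, List.map_nil, this]
    rfl
theorem flat_erase : ∀ ts : List PTree,
    ((flat ts).map (tokm emb (fun i => i))).map (tp (fun n => n)) = flat ts
  | [] => rfl
  | t :: ts => by
    have h1 := flatT_erase t
    have h2 := flat_erase ts
    simp only [flat, List.map_append, h1, h2]
end

mutual
theorem mem_flatT : ∀ (t : PTree) (A : PTy), Tok.ty A ∈ flatT t → A ∈ yieldTree t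
  | .leaf A', A, h => by simpa [flatT, yieldTree] using h
  | .node ts, A, h => by
    simp only [yieldTree]
    exact mem_flat ts A (by simpa [flatT] using h)
theorem mem_flat : ∀ (ts : List PTree) (A : PTy), Tok.ty A ∈ flat ts → A ∈ yieldHedge ts
  | [], A, h => by simp [flat] at h
  | t :: ts, A, h => by
    simp only [flat, List.mem_append, yieldHedge] at h ⊢
    exact h.imp (mem_flatT t A) (mem_flat ts A)
end

theorem cntL_p_ne {p : ℕ} {X : List (Tok LTy)} (h : cntL (.p p) X ≠ 0) :
    ∃ A, Tok.ty A ∈ X ∧ cnt (.p p) A ≠ 0 := by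
  induction X with
  | nil => simp [cntL] at h
  | cons t X ih =>
    by_cases h0 : cntL (.p p) X = 0
    · cases t with
      | ty A => exact ⟨A, by simp, by simpa [cntL, cntT, h0] using h⟩
      | op i => simp [cntL, cntT, h0, one] at h
      | cl i => simp [cntL, cntT, h0, one] at h
    · obtain ⟨A, h1, h2⟩ := ih h0
      exact ⟨A, by simp [h1], h2⟩

theorem cut_complete {B : Finset ℕ} {m : ℕ} {G : PHedge} {C : PTy}
    (hall : ∀ A ∈ yieldHedge G ++ [C], PTy.over B A ∧ lenP A ≤ m) (h : PProv G C) :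
    CutDeriv (TBm B m) G C := by
  obtain ⟨f, g, X, C', h1, h2, h3, h4⟩ := thinning (cutElim h)
  have hC : pty f C' = C := by rw [← pty_ren f g, h3, pty_emb]
  have hG : flat G = X.map (tp f) := by
    rw [← flat_erase G, ← h2, List.map_map]
    apply List.map_congr_left
    intro t _
    cases t <;> simp [tokm, pty_ren]
  have hX : ∀ A, Tok.ty A ∈ X → (pty f A).over B ∧ lenP (pty f A) ≤ m := by
    intro A hA
    apply hall
    apply List.mem_append_left
    apply mem_flat
    rw [hG]
    exact List.mem_map.2 ⟨_, hA, rfl⟩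
  have hC' : (pty f C').over B ∧ lenP (pty f C') ≤ m := hC ▸ hall C (by simp)
  have k := main_flat (f := f) (B := B) (m := m) X.length X C' le_rfl h1 ⟨h4, ?_⟩ ⟨?_, ?_⟩ G hG
  · rwa [hC] at k
  · intro p hp
    by_cases h0 : cntL (.p p) X = 0
    · exact pty_over.1 hC'.1 p (by omega)
    · obtain ⟨A, hA, hA'⟩ := cntL_p_ne h0
      exact pty_over.1 (hX A hA).1 p hA'
  · intro A hA
    rw [← len_pty f]; exact (hX A hA).2
  · rw [← len_pty f]; exact hC'.2


/-- An L◇ sequent whose yield consists of types over `B` of length ≤ m is provable in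
L◇ iff it is derivable from `T_{B,m}` using only the Cut rule. -/
theorem provable_iff_cut_derivable_from_TBm (B : Finset ℕ) (m : ℕ) (hm : 0 < m)
    (G : PHedge) (C : PTy)
    (hall : ∀ A ∈ yieldHedge G ++ [C], PTy.over B A ∧ lenP A ≤ m) :
    PProv G C ↔ CutDeriv (TBm B m) G C := by
  exact ⟨cut_complete hall, cut_sound⟩
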